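/- arXiv:2405.09872 — 3 statements merged into one kernel-verified Lean document; each statement's English description precedes it below -/
import Mathlib

section
/- For any integer n ≥ 3, any real k with 0 < k ≤ n-2, any r > 0, and any y ∈ ℝⁿ with |y| > 0, the average over the sphere ∂B_r(0) of (|y|/|x-y|)^k is at most 1, i.e. (1/|∂B_r(0)|) ∫_{∂B_r(0)} (|y|/|x-y|)^k dσ(x) ≤ 1. -/
open MeasureTheory Filter

noncomputable section

/-- Euclidean space ℝⁿ. -/
abbrev E (n : ℕ) := EuclideanSpace ℝ (Fin n)

/-- Volume of the standard unit n-sphere `|𝕊ⁿ|`. -/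
noncomputable def sphereVol (n : ℕ) : ℝ :=
  (μH[(n : ℝ)] (Metric.sphere (0 : E (n + 1)) 1)).toReal

/-- The Euclidean Laplacian of `u` at `x`. -/
noncomputable def lap {n : ℕ} (u : E n → ℝ) (x : E n) : ℝ :=
  ∑ i : Fin n, fderiv ℝ (fun y => fderiv ℝ u y (EuclideanSpace.single i 1)) x
    (EuclideanSpace.single i 1)

/-- `u` is a normal solution with Q-curvature `Q`. -/
def IsNormal (n : ℕ) (u Q : E n → ℝ) : Prop :=
  ∃ C : ℝ, ∀ x, u x =
    (2 / (Nat.factorial (n - 1) * sphereVol n)) *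
      ∫ y, Real.log (‖y‖ / ‖x - y‖) * (Q y * Real.exp (n * u y)) + C

/-- The constant `α₀`. -/
noncomputable def alpha0 (n : ℕ) (u Q : E n → ℝ) : ℝ :=
  (2 / (Nat.factorial (n - 1) * sphereVol n)) * ∫ y, Q y * Real.exp (n * u y)

/-- Scalar curvature of the conformal metric `e^{2u}|dx|²`. -/
noncomputable def Rg (n : ℕ) (u : E n → ℝ) (x : E n) : ℝ :=
  2 * (n - 1) * Real.exp (-2 * u x) *
    (-(lap u x) - (n - 2) / 2 * ‖gradient u x‖ ^ 2)

open Set Metric Topology Module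

open scoped RealInnerProductSpace

section RotationInvariant

variable {V : Type*} [NormedAddCommGroup V]

theorem continuousOn_div_norm_sub_rpow (c : ℝ) {p : ℝ} (hp : 0 ≤ p) {z : V} {K : Set V}
    (hz : z ∉ K) : ContinuousOn (fun x => (c / ‖x - z‖) ^ p) K := by
  refine ContinuousOn.rpow_const (ContinuousOn.div (by fun_prop) (by fun_prop) ?_)
    fun _ _ => Or.inr hp
  rintro x hx h
  rw [norm_eq_zero, sub_eq_zero] at h
  exact hz (h ▸ hx)

variable [InnerProductSpace ℝ V]

/-- Inversion in the sphere of radius `r`. -/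
theorem norm_sub_inversion {r : ℝ} (hr : 0 < r) {x y : V} (hx : ‖x‖ = r) (hy : y ≠ 0) :
    ‖y‖ / ‖x - y‖ = r / ‖x - (r ^ 2 / ‖y‖ ^ 2) • y‖ := by
  have hy' : 0 < ‖y‖ := norm_pos_iff.2 hy
  have h : ‖x - (r ^ 2 / ‖y‖ ^ 2) • y‖ = r / ‖y‖ * ‖x - y‖ := by
    refine (sq_eq_sq₀ (norm_nonneg _) (by positivity)).1 ?_
    rw [mul_pow, norm_sub_sq_real, norm_sub_sq_real, real_inner_smul_right, norm_smul, hx,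
      Real.norm_of_nonneg (by positivity)]
    field_simp
    ring
  rw [h]
  rcases eq_or_ne ‖x - y‖ 0 with h0 | h0
  · simp [h0]
  · field_simp

theorem inner_mem_Icc_of_mem_sphere {r : ℝ} {e x : V} (he : ‖e‖ = 1)
    (hx : x ∈ sphere (0 : V) r) : ⟪e, x⟫ ∈ Icc (-r) r := by
  have := abs_real_inner_le_norm e x
  rwa [he, one_mul, mem_sphere_zero_iff_norm.1 hx, abs_le] at this

variable [MeasurableSpace V] [BorelSpace V]

theorem setIntegral_sphere_comp_linearIsometryEquiv {μ : Measure V}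
    (hμ : ∀ R : V ≃ₗᵢ[ℝ] V, MeasurePreserving R μ μ) (R : V ≃ₗᵢ[ℝ] V) (r : ℝ) (F : V → ℝ) :
    ∫ x in sphere (0 : V) r, F (R x) ∂μ = ∫ x in sphere (0 : V) r, F x ∂μ := by
  have h := (hμ R).setIntegral_preimage_emb R.toHomeomorph.measurableEmbedding F
    (sphere (0 : V) r)
  have hpre : R ⁻¹' sphere (0 : V) r = sphere 0 r := by ext x; simp
  rwa [hpre] at h

variable [FiniteDimensional ℝ V]

/-- Differentiation under the integral sign over a compact set, for a jointly continuous
derivative. -/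
theorem hasDerivAt_setIntegral_of_isCompact {μ : Measure V} [IsFiniteMeasure μ] {K : Set V}
    (hK : IsCompact K) {U : Set ℝ} (hU : IsOpen U) {F F' : ℝ → V → ℝ}
    (hF : ∀ s ∈ U, ContinuousOn (F s) K)
    (hF' : ContinuousOn (fun p : ℝ × V => F' p.1 p.2) (U ×ˢ K))
    (hd : ∀ s ∈ U, ∀ x ∈ K, HasDerivAt (fun u => F u x) (F' s x) s) {s₀ : ℝ} (hs₀ : s₀ ∈ U) :
    HasDerivAt (fun s => ∫ x in K, F s x ∂μ) (∫ x in K, F' s₀ x ∂μ) s₀ := by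
  obtain ⟨ε, hε, hεU⟩ := Metric.nhds_basis_closedBall.mem_iff.1 (hU.mem_nhds hs₀)
  obtain ⟨C, hC⟩ := ((isCompact_closedBall s₀ ε).prod hK).exists_bound_of_continuousOn
    (hF'.mono (prod_mono_left hεU))
  have hF's : ContinuousOn (F' s₀) K :=
    hF'.comp (f := fun x => (s₀, x)) (by fun_prop) fun x hx => ⟨hs₀, hx⟩
  refine (hasDerivAt_integral_of_dominated_loc_of_deriv_le (bound := fun _ => C)
    (closedBall_mem_nhds s₀ hε) ?_ ?_ ?_ ?_ ?_ ?_).2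
  · filter_upwards [hU.mem_nhds hs₀] with s hs
    exact (hF s hs).aestronglyMeasurable hK.measurableSet
  · exact (hF s₀ hs₀).integrableOn_compact hK
  · exact hF's.aestronglyMeasurable hK.measurableSet
  · filter_upwards [ae_restrict_mem hK.measurableSet] with x hx s hs
    exact hC (s, x) ⟨hs, hx⟩
  · exact integrable_const C
  · filter_upwards [ae_restrict_mem hK.measurableSet] with x hx s hs
    exact hd s (hεU hs) x hx

/-- The infinitesimal form of invariance under rotations in the plane spanned by `e` and `f`. -/
theorem setIntegral_sphere_rotation_generator {μ : Measure V} [IsFiniteMeasure μ]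
    (hμ : ∀ R : V ≃ₗᵢ[ℝ] V, MeasurePreserving R μ μ) {r : ℝ} {G G' : ℝ → ℝ}
    (hG : ∀ t ∈ Icc (-r) r, HasDerivAt G (G' t) t) (hG' : ContinuousOn G' (Icc (-r) r))
    {e f : V} (he : ‖e‖ = 1) (hf : ‖f‖ = 1) (hef : ⟪e, f⟫ = 0) :
    ∫ x in sphere (0 : V) r, (⟪e, x⟫ * G ⟪e, x⟫ - ⟪f, x⟫ ^ 2 * G' ⟪e, x⟫) ∂μ = 0 := by
  set S := sphere (0 : V) r
  have hfe : ⟪f, e⟫ = 0 := by rw [real_inner_comm, hef]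
  have hGc : ContinuousOn G (Icc (-r) r) := fun t ht => (hG t ht).continuousAt.continuousWithinAt
  -- The reflection in the hyperplane orthogonal to `v θ`.
  let v : ℝ → V := fun θ => Real.cos θ • f + Real.sin θ • e
  let R : ℝ → V ≃ₗᵢ[ℝ] V := fun θ => (ℝ ∙ v θ)ᗮ.reflection
  let w : ℝ → V → ℝ := fun θ x => Real.cos θ * ⟪f, x⟫ + Real.sin θ * ⟪e, x⟫
  have hv : ∀ θ, ‖v θ‖ = 1 := by
    intro θ
    have : ‖v θ‖ ^ 2 = 1 := by
      simp only [v]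
      rw [norm_add_sq_real, norm_smul, norm_smul, real_inner_smul_left, real_inner_smul_right,
        hfe, he, hf]
      simp
    nlinarith [norm_nonneg (v θ)]
  have hR : ∀ θ x, R θ x = x - (2 * w θ x) • v θ := by
    intro θ x
    simp only [R, w]
    rw [Submodule.reflection_orthogonal_apply, Submodule.reflection_singleton_apply, hv θ]
    simp only [v, inner_add_left, real_inner_smul_left]
    simp [two_smul, add_smul, two_mul]
    abel
  let a : ℝ → V → ℝ := fun θ x => ⟪e, x⟫ - 2 * w θ x * Real.sin θ
  let b : ℝ → V → ℝ := fun θ x => ⟪f, x⟫ - 2 * w θ x * Real.cos θ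
  have ha : ∀ θ x, ⟪e, R θ x⟫ = a θ x := by
    intro θ x
    simp only [hR, inner_sub_right, real_inner_smul_right, v, inner_add_right, hef,
      real_inner_self_eq_norm_sq, he, a]
    ring
  have hb : ∀ θ x, ⟪f, R θ x⟫ = b θ x := by
    intro θ x
    simp only [hR, inner_sub_right, real_inner_smul_right, v, inner_add_right, hfe,
      real_inner_self_eq_norm_sq, hf, b]
    ring
  have hIcc : ∀ x ∈ S, ⟪e, x⟫ ∈ Icc (-r) r :=
    fun x hx => inner_mem_Icc_of_mem_sphere he hx
  have haIcc : ∀ θ, ∀ x ∈ S, a θ x ∈ Icc (-r) r := by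
    intro θ x hx
    rw [← ha]
    exact hIcc _ (by simpa [S] using hx)
  let w' : ℝ → V → ℝ := fun θ x => -Real.sin θ * ⟪f, x⟫ + Real.cos θ * ⟪e, x⟫
  let a' : ℝ → V → ℝ := fun θ x => -(2 * w' θ x * Real.sin θ + 2 * w θ x * Real.cos θ)
  let b' : ℝ → V → ℝ := fun θ x => -(2 * w' θ x * Real.cos θ + 2 * w θ x * -Real.sin θ)
  have hw' : ∀ θ x, HasDerivAt (fun u => w u x) (w' θ x) θ := fun θ x =>
    ((Real.hasDerivAt_cos θ).mul_const _).add ((Real.hasDerivAt_sin θ).mul_const _)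
  have ha' : ∀ θ x, HasDerivAt (fun u => a u x) (a' θ x) θ := fun θ x =>
    (((hw' θ x).const_mul 2).mul (Real.hasDerivAt_sin θ)).const_sub _
  have hb' : ∀ θ x, HasDerivAt (fun u => b u x) (b' θ x) θ := fun θ x =>
    (((hw' θ x).const_mul 2).mul (Real.hasDerivAt_cos θ)).const_sub _
  have hconst : (fun θ => ∫ x in S, b θ x * G (a θ x) ∂μ) =
      fun _ => ∫ x in S, ⟪f, x⟫ * G ⟪e, x⟫ ∂μ := by
    funext θ
    simp only [← ha, ← hb]
    exact setIntegral_sphere_comp_linearIsometryEquiv hμ (R θ) r fun x => ⟪f, x⟫ * G ⟪e, x⟫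
  have hderiv : HasDerivAt (fun θ => ∫ x in S, b θ x * G (a θ x) ∂μ)
      (∫ x in S, (b' 0 x * G (a 0 x) + b 0 x * (G' (a 0 x) * a' 0 x)) ∂μ) 0 := by
    refine hasDerivAt_setIntegral_of_isCompact (isCompact_sphere 0 r) isOpen_univ
      (F' := fun θ x => b' θ x * G (a θ x) + b θ x * (G' (a θ x) * a' θ x)) ?_ ?_ ?_ (mem_univ _)
    · intro θ _
      refine ContinuousOn.mul ?_ (hGc.comp ?_ (haIcc θ))
      · simp only [b, w]; fun_prop
      · simp only [a, w]; fun_prop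
    · have hac : ContinuousOn (fun p : ℝ × V => a p.1 p.2) (univ ×ˢ S) := by
        simp only [a, w]; fun_prop
      have hmaps : MapsTo (fun p : ℝ × V => a p.1 p.2) (univ ×ˢ S) (Icc (-r) r) :=
        fun p hp => haIcc _ _ hp.2
      refine ContinuousOn.add (ContinuousOn.mul ?_ (hGc.comp hac hmaps))
        (ContinuousOn.mul ?_ (ContinuousOn.mul (hG'.comp hac hmaps) ?_))
      · simp only [b', w, w']; fun_prop
      · simp only [b, w]; fun_prop
      · simp only [a', w, w']; fun_prop
    · intro θ _ x hx
      exact (hb' θ x).mul ((hG _ (haIcc θ x hx)).comp θ (ha' θ x))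
  rw [hconst] at hderiv
  have hzero := (hasDerivAt_const (0 : ℝ) _).unique hderiv
  have heq : ∀ x, b' 0 x * G (a 0 x) + b 0 x * (G' (a 0 x) * a' 0 x) =
      (-2) * (⟪e, x⟫ * G ⟪e, x⟫ - ⟪f, x⟫ ^ 2 * G' ⟪e, x⟫) := by
    intro x
    simp [a, b, a', b', w, w']
    ring
  simp only [heq] at hzero
  rw [integral_const_mul] at hzero
  linarith

/-- Summing the rotation identity over an orthonormal basis containing `e`. -/
theorem setIntegral_sphere_zonal {μ : Measure V} [IsFiniteMeasure μ]
    (hμ : ∀ R : V ≃ₗᵢ[ℝ] V, MeasurePreserving R μ μ) {r : ℝ} {G G' : ℝ → ℝ}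
    (hG : ∀ t ∈ Icc (-r) r, HasDerivAt G (G' t) t) (hG' : ContinuousOn G' (Icc (-r) r))
    {e : V} (he : ‖e‖ = 1) :
    ∫ x in sphere (0 : V) r, (((finrank ℝ V : ℝ) - 1) * ⟪e, x⟫ * G ⟪e, x⟫ -
      (r ^ 2 - ⟪e, x⟫ ^ 2) * G' ⟪e, x⟫) ∂μ = 0 := by
  have hpos : 0 < finrank ℝ V :=
    finrank_pos_iff_exists_ne_zero.2 ⟨e, fun h => by simp [h] at he⟩
  let i₀ : Fin (finrank ℝ V) := ⟨0, hpos⟩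
  have horth : Orthonormal ℝ (({i₀} : Set (Fin (finrank ℝ V))).domRestrict fun _ => e) := by
    constructor
    · intro i; simpa using he
    · intro i j hij; exact absurd (Subsingleton.elim i j) hij
  obtain ⟨b, hb⟩ := horth.exists_orthonormalBasis_extension_of_card_eq (by simp)
  have hb₀ : b i₀ = e := hb i₀ rfl
  have hGc : ContinuousOn G (Icc (-r) r) := fun t ht => (hG t ht).continuousAt.continuousWithinAt
  have hIcc : MapsTo (fun x : V => ⟪e, x⟫) (sphere (0 : V) r) (Icc (-r) r) :=
    fun x hx => inner_mem_Icc_of_mem_sphere he hx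
  have hec : ContinuousOn (fun x : V => ⟪e, x⟫) (sphere (0 : V) r) := by fun_prop
  have hint : ∀ i, IntegrableOn
      (fun x => ⟪e, x⟫ * G ⟪e, x⟫ - ⟪b i, x⟫ ^ 2 * G' ⟪e, x⟫) (sphere (0 : V) r) μ := by
    intro i
    refine ContinuousOn.integrableOn_compact (isCompact_sphere 0 r) ?_
    refine (hec.mul (hGc.comp hec hIcc)).sub (ContinuousOn.mul ?_ (hG'.comp hec hIcc))
    fun_prop
  have hsum : ∀ x ∈ sphere (0 : V) r, ((finrank ℝ V : ℝ) - 1) * ⟪e, x⟫ * G ⟪e, x⟫ -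
      (r ^ 2 - ⟪e, x⟫ ^ 2) * G' ⟪e, x⟫ =
      ∑ i ∈ Finset.univ.erase i₀, (⟪e, x⟫ * G ⟪e, x⟫ - ⟪b i, x⟫ ^ 2 * G' ⟪e, x⟫) := by
    intro x hx
    have hnorm : ∑ i, ⟪b i, x⟫ ^ 2 = r ^ 2 := by
      have := b.sum_sq_norm_inner_right x
      simpa [mem_sphere_zero_iff_norm.1 hx] using this
    rw [← Finset.add_sum_erase _ _ (Finset.mem_univ i₀), hb₀] at hnorm
    rw [Finset.sum_sub_distrib, Finset.sum_const, ← Finset.sum_mul,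
      Finset.card_erase_of_mem (Finset.mem_univ _), Finset.card_univ, Fintype.card_fin,
      nsmul_eq_mul, Nat.cast_sub hpos, ← hnorm]
    push_cast
    ring
  rw [setIntegral_congr_fun isClosed_sphere.measurableSet hsum,
    integral_finsetSum _ fun i _ => hint i]
  refine Finset.sum_eq_zero fun i hi => ?_
  refine setIntegral_sphere_rotation_generator hμ hG hG' he (b.norm_eq_one i) ?_
  rw [← hb₀]
  exact b.inner_eq_zero (Finset.ne_of_mem_erase hi).symm

/-- The average over a sphere of the Newtonian kernel with pole inside the sphere does not depend
on the pole. -/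
theorem setIntegral_sphere_newton_kernel {μ : Measure V} [IsFiniteMeasure μ]
    (hμ : ∀ R : V ≃ₗᵢ[ℝ] V, MeasurePreserving R μ μ) {m : ℕ} (hm : finrank ℝ V = m + 2)
    {e : V} (he : ‖e‖ = 1) {r s : ℝ} (hs : 0 ≤ s) (hsr : s < r) :
    ∫ x in sphere (0 : V) r, (r ^ 2 - 2 * s * ⟪e, x⟫ + s ^ 2) ^ (-(m : ℝ) / 2) ∂μ =
      ∫ _ in sphere (0 : V) r, (r ^ 2) ^ (-(m : ℝ) / 2) ∂μ := by
  set S := sphere (0 : V) r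
  let D : ℝ → ℝ → ℝ := fun s t => r ^ 2 - 2 * s * t + s ^ 2
  have hD : ∀ s ∈ Ioo (-r) r, ∀ t ∈ Icc (-r) r, D s t ≠ 0 := by
    rintro s ⟨hs1, hs2⟩ t ⟨ht1, ht2⟩
    have : 0 < D s t := by
      simp only [D]
      rcases le_total 0 s with h | h
      · nlinarith [mul_nonneg h (sub_nonneg.2 ht2), sq_pos_of_pos (sub_pos.2 hs2)]
      · nlinarith [mul_nonneg (neg_nonneg.2 h) (neg_le_iff_add_nonneg.1 ht1),
          sq_pos_of_pos (neg_lt_iff_pos_add.1 hs1)]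
    exact this.ne'
  have hIcc : ∀ x ∈ S, ⟪e, x⟫ ∈ Icc (-r) r := fun x hx => inner_mem_Icc_of_mem_sphere he hx
  have hDs : ∀ s t, HasDerivAt (fun u => D u t) (-(2 * t) + 2 * s) s := by
    intro s t
    refine (((((hasDerivAt_id s).const_mul 2).mul_const t).const_sub (r ^ 2)).add
      (hasDerivAt_pow 2 s)).congr_deriv ?_
    simp
  have hDt : ∀ s t, HasDerivAt (fun u => D s u) (-(2 * s)) t := by
    intro s t
    refine ((((hasDerivAt_id t).const_mul (2 * s)).const_sub (r ^ 2)).add_const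
      (s ^ 2)).congr_deriv ?_
    simp
  have hpow : ∀ p : ℝ, ContinuousOn (fun z : ℝ × V => D z.1 ⟪e, z.2⟫ ^ p) (Ioo (-r) r ×ˢ S) := by
    intro p
    refine ContinuousOn.rpow_const ?_ fun z hz => Or.inl (hD _ hz.1 _ (hIcc _ hz.2))
    simp only [D]; fun_prop
  have hslice : ∀ p : ℝ, ∀ s ∈ Ioo (-r) r, ContinuousOn (fun x : V => D s ⟪e, x⟫ ^ p) S :=
    fun p s hs => (hpow p).comp (f := fun x => (s, x)) (by fun_prop) fun x hx => ⟨hs, hx⟩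
  let q : ℝ := -(m : ℝ) / 2
  have hh : ∀ s ∈ Ioo (-r) r, HasDerivAt (fun s => ∫ x in S, D s ⟪e, x⟫ ^ q ∂μ)
      (∫ x in S, (-(2 * ⟪e, x⟫) + 2 * s) * q * D s ⟪e, x⟫ ^ (q - 1) ∂μ) s := by
    intro s hs
    refine hasDerivAt_setIntegral_of_isCompact (isCompact_sphere 0 r) isOpen_Ioo
      (F' := fun s x => (-(2 * ⟪e, x⟫) + 2 * s) * q * D s ⟪e, x⟫ ^ (q - 1))
      (hslice q) ?_ ?_ hs
    · exact ContinuousOn.mul (by fun_prop) (hpow (q - 1))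
    · intro s hs x hx
      exact (hDs s _).rpow_const (Or.inl (hD s hs _ (hIcc x hx)))
  -- The flux of the gradient through spheres vanishes.
  have hW : ∀ s ∈ Ioo (-r) r, HasDerivAt
      (fun s => ∫ x in S, s ^ (m + 1) * (⟪e, x⟫ - s) * D s ⟪e, x⟫ ^ (q - 1) ∂μ) 0 s := by
    intro s hs
    have hzonal : ∫ x in S, (((finrank ℝ V : ℝ) - 1) * ⟪e, x⟫ *
          (s ^ m * D s ⟪e, x⟫ ^ (q - 1)) - (r ^ 2 - ⟪e, x⟫ ^ 2) *
          (s ^ m * (-(2 * s) * (q - 1) * D s ⟪e, x⟫ ^ (q - 1 - 1)))) ∂μ = 0 := by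
      refine setIntegral_sphere_zonal hμ (G := fun t => s ^ m * D s t ^ (q - 1))
        (G' := fun t => s ^ m * (-(2 * s) * (q - 1) * D s t ^ (q - 1 - 1))) ?_ ?_ he
      · intro t ht
        exact ((hDt s t).rpow_const (Or.inl (hD s hs t ht))).const_mul _
      · refine ContinuousOn.mul (by fun_prop) (ContinuousOn.mul (by fun_prop) ?_)
        refine ContinuousOn.rpow_const ?_ fun t ht => Or.inl (hD s hs t ht)
        simp only [D]; fun_prop
    rw [← hzonal]
    have hder := hasDerivAt_setIntegral_of_isCompact (μ := μ) (isCompact_sphere (0 : V) r)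
      (isOpen_Ioo (a := -r) (b := r))
      (F := fun s x => s ^ (m + 1) * (⟪e, x⟫ - s) * D s ⟪e, x⟫ ^ (q - 1))
      (F' := fun s x => (((m : ℝ) + 1) * s ^ m * (⟪e, x⟫ - s) + s ^ (m + 1) * -1) *
        D s ⟪e, x⟫ ^ (q - 1) + s ^ (m + 1) * (⟪e, x⟫ - s) *
        ((-(2 * ⟪e, x⟫) + 2 * s) * (q - 1) * D s ⟪e, x⟫ ^ (q - 1 - 1))) ?_ ?_ ?_ hs
    · convert hder using 1
      refine setIntegral_congr_fun isClosed_sphere.measurableSet fun x hx => ?_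
      have hrec : D s ⟪e, x⟫ ^ (q - 1) = D s ⟪e, x⟫ ^ (q - 1 - 1) * D s ⟪e, x⟫ := by
        rw [← Real.rpow_add_one (hD s hs _ (hIcc x hx)), sub_add_cancel]
      simp only [hrec, hm, D, q]
      push_cast
      ring
    · intro s hs
      exact ContinuousOn.mul (by fun_prop) (hslice _ s hs)
    · refine ContinuousOn.add (ContinuousOn.mul (by fun_prop) (hpow _))
        (ContinuousOn.mul (by fun_prop) (ContinuousOn.mul (by fun_prop) (hpow _)))
    · intro s hs x hx
      have h1 : HasDerivAt (fun s : ℝ => s ^ (m + 1)) (((m : ℝ) + 1) * s ^ m) s := by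
        simpa using hasDerivAt_pow (m + 1) s
      exact (h1.mul ((hasDerivAt_id s).const_sub _)).mul
        ((hDs s _).rpow_const (Or.inl (hD s hs _ (hIcc x hx))))
  have hconst : ∀ {g g' : ℝ → ℝ}, (∀ u ∈ Ioo (-r) r, HasDerivAt g (g' u) u) →
      (∀ u ∈ Ioo 0 r, g' u = 0) → ∀ u, 0 ≤ u → u < r → g u = g 0 := by
    intro g g' hg hg' u hu hur
    rcases hu.eq_or_lt with rfl | hu
    · rfl
    obtain ⟨c, hc, hslope⟩ := exists_hasDerivAt_eq_slope g g' hu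
      (fun v hv => (hg v ⟨by linarith [hv.1], by linarith [hv.2]⟩).continuousAt.continuousWithinAt)
      (fun v hv => hg v ⟨by linarith [hv.1], by linarith [hv.2]⟩)
    rw [hg' c ⟨hc.1, hc.2.trans hur⟩, eq_comm, div_eq_zero_iff] at hslope
    rcases hslope with h | h <;> linarith
  have hW₀ : ∀ u ∈ Ioo 0 r, ∫ x in S, (-(2 * ⟪e, x⟫) + 2 * u) * q *
      D u ⟪e, x⟫ ^ (q - 1) ∂μ = 0 := by
    intro u hu
    have h := hconst hW (fun _ _ => rfl) u hu.1.le hu.2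
    simp only [mul_assoc, integral_const_mul] at h
    rw [zero_pow (Nat.succ_ne_zero m), zero_mul, mul_eq_zero,
      or_iff_right (pow_ne_zero _ hu.1.ne')] at h
    have hrw : ∀ x : V, (-(2 * ⟪e, x⟫) + 2 * u) * q * D u ⟪e, x⟫ ^ (q - 1) =
        (-2 * q) * ((⟪e, x⟫ - u) * D u ⟪e, x⟫ ^ (q - 1)) := fun x => by ring
    simp only [hrw]
    rw [integral_const_mul, h, mul_zero]
  have := hconst hh hW₀ s hs hsr
  simpa [D, q] using this

/-- The mean value property of the Newtonian kernel on a sphere enclosing its pole. -/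
theorem setIntegral_sphere_div_norm_sub_pow {μ : Measure V} [IsFiniteMeasure μ]
    (hμ : ∀ R : V ≃ₗᵢ[ℝ] V, MeasurePreserving R μ μ) {m : ℕ} (hm : finrank ℝ V = m + 2)
    {r : ℝ} {z : V} (hz : ‖z‖ < r) :
    ∫ x in sphere (0 : V) r, (r / ‖x - z‖) ^ (m : ℝ) ∂μ = μ.real (sphere (0 : V) r) := by
  have hr : 0 < r := (norm_nonneg z).trans_lt hz
  have : Nontrivial V := nontrivial_of_finrank_pos (R := ℝ) (by omega)
  obtain ⟨e, he, hze⟩ : ∃ e : V, ‖e‖ = 1 ∧ z = ‖z‖ • e := by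
    rcases eq_or_ne z 0 with rfl | h
    · obtain ⟨e, he⟩ := exists_norm_eq V zero_le_one
      exact ⟨e, he, by simp⟩
    · exact ⟨‖z‖⁻¹ • z, by simp [norm_smul, h], by simp [smul_smul, h]⟩
  have hkey := setIntegral_sphere_newton_kernel hμ hm he (norm_nonneg z) hz
  have heq : ∀ x ∈ sphere (0 : V) r, (r / ‖x - z‖) ^ (m : ℝ) =
      r ^ (m : ℝ) * (r ^ 2 - 2 * ‖z‖ * ⟪e, x⟫ + ‖z‖ ^ 2) ^ (-(m : ℝ) / 2) := by
    intro x hx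
    have hsq : r ^ 2 - 2 * ‖z‖ * ⟪e, x⟫ + ‖z‖ ^ 2 = ‖x - z‖ ^ 2 := by
      have hi : ⟪x, z⟫ = ‖z‖ * ⟪e, x⟫ := by
        conv_lhs => rw [hze, real_inner_smul_right, real_inner_comm]
      rw [norm_sub_sq_real, mem_sphere_zero_iff_norm.1 hx, hi]
      ring
    rw [hsq, ← Real.rpow_natCast ‖x - z‖ 2, ← Real.rpow_mul (norm_nonneg _),
      Real.div_rpow hr.le (norm_nonneg _), div_eq_mul_inv, ← Real.rpow_neg (norm_nonneg _)]
    congr 2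
    push_cast
    ring
  rw [setIntegral_congr_fun isClosed_sphere.measurableSet heq, integral_const_mul, hkey,
    ← Real.rpow_natCast r 2, ← Real.rpow_mul hr.le, setIntegral_const, smul_eq_mul,
    mul_left_comm, ← Real.rpow_add hr]
  have : (m : ℝ) + ((2 : ℕ) : ℝ) * (-(m : ℝ) / 2) = 0 := by push_cast; ring
  rw [this, Real.rpow_zero, mul_one]

theorem setIntegral_sphere_div_norm_sub_rpow_le {μ : Measure V} [IsFiniteMeasure μ]
    (hμ : ∀ R : V ≃ₗᵢ[ℝ] V, MeasurePreserving R μ μ) {m : ℕ} (hm₀ : m ≠ 0)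
    (hm : finrank ℝ V = m + 2) {k : ℝ} (hk₀ : 0 ≤ k) (hk : k ≤ m)
    {r : ℝ} {z : V} (hz : ‖z‖ < r) :
    ∫ x in sphere (0 : V) r, (r / ‖x - z‖) ^ k ∂μ ≤ μ.real (sphere (0 : V) r) := by
  have hr : 0 < r := (norm_nonneg z).trans_lt hz
  have hm' : (0 : ℝ) < m := by positivity
  have hzS : z ∉ sphere (0 : V) r := fun h => hz.ne (mem_sphere_zero_iff_norm.1 h)
  have hint : ∀ p : ℝ, 0 ≤ p →
      IntegrableOn (fun x => (r / ‖x - z‖) ^ p) (sphere (0 : V) r) μ := fun p hp =>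
    (continuousOn_div_norm_sub_rpow r hp hzS).integrableOn_compact (isCompact_sphere 0 r)
  have hint' : IntegrableOn (fun x => (k / m) * (r / ‖x - z‖) ^ (m : ℝ))
      (sphere (0 : V) r) μ := (hint m hm'.le).const_mul _
  have hone : IntegrableOn (fun _ : V => 1 - k / m) (sphere (0 : V) r) μ :=
    integrable_const _
  calc ∫ x in sphere (0 : V) r, (r / ‖x - z‖) ^ k ∂μ
      ≤ ∫ x in sphere (0 : V) r, ((1 - k / m) + (k / m) * (r / ‖x - z‖) ^ (m : ℝ)) ∂μ := by
        refine integral_mono (hint k hk₀) (hone.add hint') fun x => ?_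
        have hu : 0 ≤ r / ‖x - z‖ := by positivity
        have hb := rpow_one_add_le_one_add_mul_self (s := (r / ‖x - z‖) ^ (m : ℝ) - 1)
          (by linarith [Real.rpow_nonneg hu m]) (p := k / m) (by positivity)
          ((div_le_one hm').2 hk)
        rw [add_sub_cancel, ← Real.rpow_mul hu, mul_div_cancel₀ _ hm'.ne'] at hb
        simp only
        linarith
    _ = μ.real (sphere (0 : V) r) := by
        rw [integral_add hone hint', integral_const_mul,
          setIntegral_sphere_div_norm_sub_pow hμ hm hz, setIntegral_const, smul_eq_mul]
        ring

/-- The boundary case follows from the interior one by dominated convergence. -/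
theorem setIntegral_sphere_div_norm_sub_rpow_le_of_norm_eq {μ : Measure V} [IsFiniteMeasure μ]
    [NullSingletonClass μ] (hμ : ∀ R : V ≃ₗᵢ[ℝ] V, MeasurePreserving R μ μ) {m : ℕ} (hm₀ : m ≠ 0)
    (hm : finrank ℝ V = m + 2) {k : ℝ} (hk₀ : 0 ≤ k) (hk : k ≤ m)
    {r : ℝ} (hr : 0 < r) {y : V} (hy : ‖y‖ = r) :
    ∫ x in sphere (0 : V) r, (r / ‖x - y‖) ^ k ∂μ ≤ μ.real (sphere (0 : V) r) := by
  by_cases hint : IntegrableOn (fun x => (r / ‖x - y‖) ^ k) (sphere (0 : V) r) μ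
  swap
  · rw [integral_undef hint]
    positivity
  have hev : ∀ᶠ s : ℝ in 𝓝[<] 1, s ∈ Ioo (1 / 4 : ℝ) 1 := Ioo_mem_nhdsLT (by norm_num)
  have hnorm : ∀ s ∈ Ioo (1 / 4 : ℝ) 1, ‖s • y‖ < r := by
    intro s hs
    rw [norm_smul, Real.norm_of_nonneg (by linarith [hs.1]), hy]
    nlinarith [hs.2]
  have hlim : Tendsto (fun s : ℝ => ∫ x in sphere (0 : V) r, (r / ‖x - s • y‖) ^ k ∂μ) (𝓝[<] 1)
      (𝓝 (∫ x in sphere (0 : V) r, (r / ‖x - y‖) ^ k ∂μ)) := by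
    refine tendsto_integral_filter_of_dominated_convergence
      (fun x => 2 ^ k * (r / ‖x - y‖) ^ k) ?_ ?_ (hint.const_mul _) ?_
    · filter_upwards [hev] with s hs
      exact (continuousOn_div_norm_sub_rpow r hk₀ fun h =>
        (hnorm s hs).ne (mem_sphere_zero_iff_norm.1 h)).aestronglyMeasurable
          isClosed_sphere.measurableSet
    · filter_upwards [hev] with s hs
      filter_upwards [ae_restrict_mem isClosed_sphere.measurableSet,
        ae_restrict_of_ae (Measure.ae_ne μ y)] with x hx hxy
      have hx' := mem_sphere_zero_iff_norm.1 hx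
      have hpos : 0 < ‖x - y‖ := norm_pos_iff.2 (sub_ne_zero.2 hxy)
      have hle : ‖x - y‖ / 2 ≤ ‖x - s • y‖ := by
        refine (sq_le_sq₀ (by positivity) (norm_nonneg _)).1 ?_
        have h1 : ‖x - s • y‖ ^ 2 = s * ‖x - y‖ ^ 2 + r ^ 2 * (1 - s) ^ 2 := by
          rw [norm_sub_sq_real, norm_sub_sq_real, real_inner_smul_right, norm_smul, mul_pow,
            Real.norm_eq_abs, sq_abs, hx', hy]
          ring
        rw [h1]
        nlinarith [hs.1, sq_nonneg (r * (1 - s)), sq_nonneg ‖x - y‖]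
      rw [Real.norm_of_nonneg (by positivity), ← Real.mul_rpow zero_le_two (by positivity)]
      refine Real.rpow_le_rpow (by positivity) ?_ hk₀
      calc r / ‖x - s • y‖ ≤ r / (‖x - y‖ / 2) := by gcongr
        _ = 2 * (r / ‖x - y‖) := by field_simp
    · filter_upwards [ae_restrict_of_ae (Measure.ae_ne μ y)] with x hxy
      have hpos : ‖x - (1 : ℝ) • y‖ ≠ 0 := by
        rw [one_smul]; exact norm_ne_zero_iff.2 (sub_ne_zero.2 hxy)
      have hc : ContinuousAt (fun s : ℝ => (r / ‖x - s • y‖) ^ k) 1 := by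
        refine ContinuousAt.rpow_const ?_ (Or.inr hk₀)
        exact ContinuousAt.div (g := fun s : ℝ => ‖x - s • y‖) (by fun_prop) (by fun_prop) hpos
      have := hc.tendsto.mono_left (nhdsWithin_le_nhds (s := Iio 1))
      simpa using this
  refine le_of_tendsto hlim ?_
  filter_upwards [hev] with s hs
  exact setIntegral_sphere_div_norm_sub_rpow_le hμ hm₀ hm hk₀ hk (hnorm s hs)

theorem setIntegral_sphere_norm_div_norm_sub_rpow_le {μ : Measure V} [IsFiniteMeasure μ]
    [NullSingletonClass μ] (hμ : ∀ R : V ≃ₗᵢ[ℝ] V, MeasurePreserving R μ μ) {m : ℕ} (hm₀ : m ≠ 0)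
    (hm : finrank ℝ V = m + 2) {k : ℝ} (hk₀ : 0 ≤ k) (hk : k ≤ m)
    {r : ℝ} (hr : 0 < r) {y : V} (hy : y ≠ 0) :
    ∫ x in sphere (0 : V) r, (‖y‖ / ‖x - y‖) ^ k ∂μ ≤ μ.real (sphere (0 : V) r) := by
  have hy' : 0 < ‖y‖ := norm_pos_iff.2 hy
  rcases lt_trichotomy ‖y‖ r with h | h | h
  · have hyS : y ∉ sphere (0 : V) r := fun h' => h.ne (mem_sphere_zero_iff_norm.1 h')
    refine le_trans (integral_mono ?_ ?_ fun x => ?_)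
      (setIntegral_sphere_div_norm_sub_rpow_le hμ hm₀ hm hk₀ hk h)
    · exact (continuousOn_div_norm_sub_rpow _ hk₀ hyS).integrableOn_compact (isCompact_sphere 0 r)
    · exact (continuousOn_div_norm_sub_rpow _ hk₀ hyS).integrableOn_compact (isCompact_sphere 0 r)
    · dsimp only
      gcongr
  · rw [h]
    exact setIntegral_sphere_div_norm_sub_rpow_le_of_norm_eq hμ hm₀ hm hk₀ hk hr h
  · rw [setIntegral_congr_fun isClosed_sphere.measurableSet fun x hx => by
      rw [norm_sub_inversion hr (mem_sphere_zero_iff_norm.1 hx) hy]]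
    refine setIntegral_sphere_div_norm_sub_rpow_le hμ hm₀ hm hk₀ hk ?_
    rw [norm_smul, Real.norm_of_nonneg (by positivity)]
    calc r ^ 2 / ‖y‖ ^ 2 * ‖y‖ = r * (r / ‖y‖) := by field_simp
      _ < r * 1 := by gcongr; exact (div_lt_one hy').2 h
      _ = r := mul_one r

end RotationInvariant

/-- the spherical average of `(|y|/|x−y|)^k` is at most 1. -/
theorem stmt_0 (n : ℕ) (hn : 3 ≤ n) (k : ℝ) (hk0 : 0 < k) (hk : k ≤ (n : ℝ) - 2)
    (r : ℝ) (hr : 0 < r) (y : E n) (hy : y ≠ 0) :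
    (⨍ x in Metric.sphere (0 : E n) r, (‖y‖ / ‖x - y‖) ^ k ∂μH[(n : ℝ) - 1]) ≤ 1 := by
  set S := sphere (0 : E n) r
  set ν : Measure (E n) := μH[(n : ℝ) - 1]
  have hn' : (3 : ℝ) ≤ n := by exact_mod_cast hn
  rw [setAverage_eq]
  by_cases hfin : ν S = ⊤
  · simp [measureReal_def, hfin]
  have : IsFiniteMeasure (ν.restrict S) := isFiniteMeasure_restrict.2 hfin
  have : NullSingletonClass ν := Measure.nullSingletonClass_hausdorff _ (by linarith)
  have hinv : ∀ R : E n ≃ₗᵢ[ℝ] E n, MeasurePreserving R (ν.restrict S) (ν.restrict S) := by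
    intro R
    have h := (R.toIsometryEquiv.measurePreserving_hausdorffMeasure ((n : ℝ) - 1)).restrict_preimage
      (isClosed_sphere (x := (0 : E n)) (ε := r)).measurableSet
    have hpre : R.toIsometryEquiv ⁻¹' sphere (0 : E n) r = sphere 0 r := by ext x; simp
    rwa [hpre] at h
  obtain ⟨m, rfl⟩ : ∃ m, n = m + 2 := ⟨n - 2, by omega⟩
  have hle := setIntegral_sphere_norm_div_norm_sub_rpow_le hinv (m := m) (by omega) (by simp)
    hk0.le (by push_cast at hk; linarith) hr hy
  rw [Measure.restrict_restrict_of_subset subset_rfl, measureReal_restrict_apply_self] at hle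
  rw [smul_eq_mul]
  exact inv_mul_le_one_of_le₀ hle measureReal_nonneg
end
end

section
/- Let n ≥ 4 be even and u a normal solution with Q e^{nu} ∈ L¹(ℝⁿ). Then for every k > 0, the spherical average of e^{ku} over ∂B_r(0) equals e^{k ū(r) + o(1)} as r → ∞; equivalently, (1/|∂B_r(0)|) ∫_{∂B_r(0)} e^{k(u − ū(r))} dσ → 1 as r → ∞. -/
open MeasureTheory Filter

noncomputable section

section

open ProbabilityTheory
open scoped RealInnerProductSpace ENNReal Pointwise

lemma setLIntegral_enorm_rpow_neg_half_lt_top :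
    ∫⁻ t in Set.Icc (-1 : ℝ) 1, ‖t‖ₑ ^ (-(1 / 2) : ℝ) < ∞ := by
  have h1 : IntervalIntegrable (fun t : ℝ => |t| ^ (-(1 / 2) : ℝ)) volume 0 1 := by
    refine (intervalIntegral.intervalIntegrable_rpow' (r := (-(1 / 2) : ℝ)) (by norm_num)).congr ?_
    intro t ht
    rw [Set.uIoc_of_le zero_le_one] at ht
    simp [abs_of_pos ht.1]
  have h2 : IntervalIntegrable (fun t : ℝ => |t| ^ (-(1 / 2) : ℝ)) volume (-1) 0 := by
    rw [IntervalIntegrable.iff_comp_neg]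
    simpa using h1.symm
  have h3 := (intervalIntegrable_iff_integrableOn_Icc_of_le (by norm_num)).1 (h2.trans h1)
  refine lt_of_le_of_lt (lintegral_mono_ae ?_) h3.2
  have h0 : ∀ᵐ t : ℝ ∂volume.restrict (Set.Icc (-1) 1), t ≠ 0 :=
    ae_restrict_of_ae (Measure.ae_ne volume 0)
  filter_upwards [h0] with t ht
  rw [Real.enorm_eq_ofReal_abs, Real.enorm_of_nonneg (by positivity),
    ENNReal.ofReal_rpow_of_pos (abs_pos.2 ht)]

lemma lintegral_gaussianReal_enorm_rpow_neg_half_lt_top :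
    ∫⁻ t, ‖t‖ₑ ^ (-(1 / 2) : ℝ) ∂gaussianReal 0 1 < ∞ := by
  have hle : gaussianReal 0 1 ≤ volume := by
    rw [gaussianReal_of_var_ne_zero _ one_ne_zero]
    conv_rhs => rw [← withDensity_one (μ := (volume : Measure ℝ))]
    refine withDensity_mono (ae_of_all _ fun t => ?_)
    simp only [gaussianPDF, gaussianPDFReal, Pi.one_apply]
    rw [ENNReal.ofReal_le_one]
    refine mul_le_one₀ (inv_le_one_of_one_le₀ ?_) (Real.exp_nonneg _) (Real.exp_le_one_iff.2 ?_)
    · rw [Real.one_le_sqrt]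
      have := Real.pi_gt_three
      simp; linarith
    · exact div_nonpos_of_nonpos_of_nonneg (by nlinarith [sq_nonneg t]) (by positivity)
  rw [← lintegral_add_compl _ (measurableSet_Icc (a := (-1 : ℝ)) (b := 1))]
  refine ENNReal.add_lt_top.2 ⟨?_, ?_⟩
  · exact (lintegral_mono' (Measure.restrict_mono le_rfl hle) le_rfl).trans_lt
      setLIntegral_enorm_rpow_neg_half_lt_top
  · refine (setLIntegral_mono (g := fun _ => 1) measurable_const fun t ht => ?_).trans_lt
      (by simp)
    refine ENNReal.rpow_le_one_of_one_le_of_neg ?_ (by norm_num)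
    rw [Real.enorm_eq_ofReal_abs, ENNReal.one_le_ofReal]
    by_contra! h
    exact ht ⟨(abs_lt.1 h).1.le, (abs_lt.1 h).2.le⟩

lemma lintegral_stdGaussian_enorm_inner {n : ℕ} {x : E n} (hx : ‖x‖ = 1) :
    ∫⁻ w, ‖⟪x, w⟫‖ₑ ^ (-(1 / 2) : ℝ) ∂stdGaussian (E n) =
      ∫⁻ t, ‖t‖ₑ ^ (-(1 / 2) : ℝ) ∂gaussianReal 0 1 := by
  have h := IsGaussian.map_eq_gaussianReal (μ := stdGaussian (E n)) (innerSL ℝ x)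
  rw [integral_strongDual_stdGaussian, variance_dual_stdGaussian, innerSL_apply_norm, hx] at h
  simp only [one_pow, Real.toNNReal_one] at h
  rw [← h, lintegral_map (by fun_prop) (by fun_prop)]
  rfl

/-- A uniform bound for the average of `|⟪x, w⟫|⁻¹ᐟ²` over the unit sphere. -/
noncomputable def innerBound (n : ℕ) : ℝ≥0∞ :=
  (∫⁻ t, ‖t‖ₑ ^ (-(1 / 2) : ℝ) ∂gaussianReal 0 1) /
    ∫⁻ w, ‖w‖ₑ ^ (-(1 / 2) : ℝ) ∂stdGaussian (E n)

lemma lintegral_stdGaussian_enorm_ne_zero (n : ℕ) :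
    ∫⁻ w, ‖w‖ₑ ^ (-(1 / 2) : ℝ) ∂stdGaussian (E n) ≠ 0 := by
  refine ne_of_gt ((lintegral_pos_iff_support (by fun_prop)).2 ?_)
  have : (Function.support fun w : E n => ‖w‖ₑ ^ (-(1 / 2) : ℝ)) = Set.univ := by
    ext w
    simp
  rw [this]; simp

lemma innerBound_lt_top (n : ℕ) : innerBound n < ∞ :=
  ENNReal.div_lt_top lintegral_gaussianReal_enorm_rpow_neg_half_lt_top.ne
    (lintegral_stdGaussian_enorm_ne_zero n)

/-- Rotation invariance turns the average over the sphere into a Gaussian average. -/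
lemma lintegral_enorm_inner_le {n : ℕ} {r : ℝ} (hr : 0 < r) {σ : Measure (E n)}
    [IsProbabilityMeasure σ] (hσ : ∀ᵐ x ∂σ, ‖x‖ = r)
    (hinv : ∀ L : E n ≃ₗᵢ[ℝ] E n, MeasurePreserving L σ σ) {w : E n} (hw : ‖w‖ = 1) :
    ∫⁻ x, ‖⟪r⁻¹ • x, w⟫‖ₑ ^ (-(1 / 2) : ℝ) ∂σ ≤ innerBound n := by
  set I := ∫⁻ x, ‖⟪r⁻¹ • x, w⟫‖ₑ ^ (-(1 / 2) : ℝ) ∂σ with hI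
  have hunit : ∀ w' : E n, ‖w'‖ = 1 → ∫⁻ x, ‖⟪r⁻¹ • x, w'⟫‖ₑ ^ (-(1 / 2) : ℝ) ∂σ = I := by
    intro w' hw'
    set L : E n ≃ₗᵢ[ℝ] E n := (ℝ ∙ (w - w'))ᗮ.reflection
    have hL : L w = w' := Submodule.reflection_sub (hw.trans hw'.symm)
    rw [← (hinv L).lintegral_comp (by fun_prop)]
    refine lintegral_congr fun x => ?_
    rw [← hL, ← map_smul, L.inner_map_map]
  have hhom : ∀ w' : E n, w' ≠ 0 → ∫⁻ x, ‖⟪r⁻¹ • x, w'⟫‖ₑ ^ (-(1 / 2) : ℝ) ∂σ =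
      I * ‖w'‖ₑ ^ (-(1 / 2) : ℝ) := by
    intro w' hw'
    have hpos : 0 < ‖w'‖ := norm_pos_iff.2 hw'
    rw [← hunit (‖w'‖⁻¹ • w') (by rw [norm_smul, norm_inv, norm_norm, inv_mul_cancel₀ hpos.ne']),
      ← lintegral_mul_const _ (by fun_prop)]
    refine lintegral_congr fun x => ?_
    have : ⟪r⁻¹ • x, w'⟫ = ⟪r⁻¹ • x, ‖w'‖⁻¹ • w'⟫ * ‖w'‖ := by
      rw [inner_smul_right (r⁻¹ • x) w']; field_simp
    rw [this, enorm_mul, enorm_norm, ENNReal.mul_rpow_of_ne_top (by simp) (by simp)]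
  have hswap := lintegral_lintegral_swap (μ := stdGaussian (E n)) (ν := σ)
    (f := fun w x => ‖⟪r⁻¹ • x, w⟫‖ₑ ^ (-(1 / 2) : ℝ)) (by fun_prop)
  have hright : ∫⁻ x, ∫⁻ w, ‖⟪r⁻¹ • x, w⟫‖ₑ ^ (-(1 / 2) : ℝ) ∂stdGaussian (E n) ∂σ =
      ∫⁻ t, ‖t‖ₑ ^ (-(1 / 2) : ℝ) ∂gaussianReal 0 1 := by
    rw [lintegral_congr_ae (g := fun _ => ∫⁻ t, ‖t‖ₑ ^ (-(1 / 2) : ℝ) ∂gaussianReal 0 1)]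
    · simp
    · filter_upwards [hσ] with x hx
      refine lintegral_stdGaussian_enorm_inner ?_
      rw [norm_smul, hx, Real.norm_of_nonneg (by positivity), inv_mul_cancel₀ hr.ne']
  rw [hright] at hswap
  rw [innerBound, ENNReal.le_div_iff_mul_le, ← hswap, ← lintegral_const_mul _ (by fun_prop)]
  · refine lintegral_mono fun w' => ?_
    by_cases h : w' = 0
    · subst h
      simp
    · exact (hhom w' h).ge
  · exact Or.inl (lintegral_stdGaussian_enorm_ne_zero n)
  · exact Or.inr lintegral_gaussianReal_enorm_rpow_neg_half_lt_top.ne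

lemma exists_unit_orthogonal {n : ℕ} (hn : 2 ≤ n) (y : E n) : ∃ w : E n, ‖w‖ = 1 ∧ ⟪y, w⟫ = 0 := by
  have hpos : 0 < Module.finrank ℝ (ℝ ∙ y)ᗮ := by
    have h1 := Submodule.finrank_add_finrank_orthogonal (ℝ ∙ y)
    have h2 := finrank_span_le_card (R := ℝ) ({y} : Set (E n))
    simp at h1 h2
    omega
  have : Nontrivial (ℝ ∙ y)ᗮ := Module.finrank_pos_iff.1 hpos
  obtain ⟨w, hw⟩ := exists_norm_eq (ℝ ∙ y)ᗮ zero_le_one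
  exact ⟨w, hw, Submodule.mem_orthogonal_singleton_iff_inner_right.1 w.2⟩

/-- The logarithmic kernel, normalized to stay bounded below for `‖x‖ = r`. -/
noncomputable def logKernel {n : ℕ} (r : ℝ) (x y : E n) : ℝ := Real.log (max ‖y‖ r / ‖x - y‖)

lemma measurable_logKernel {n : ℕ} (r : ℝ) :
    Measurable fun z : E n × E n => logKernel r z.1 z.2 := by
  unfold logKernel
  fun_prop

lemma measurable_logKernel_right {n : ℕ} (r : ℝ) (x : E n) : Measurable (logKernel r x) := by
  unfold logKernel
  fun_prop

lemma exp_abs_logKernel_le {n : ℕ} {r : ℝ} (hr : 0 < r) {x y w : E n} (hx : ‖x‖ = r)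
    (hw : ‖w‖ = 1) (hyw : ⟪y, w⟫ = 0) (h0 : 0 < |⟪r⁻¹ • x, w⟫|) :
    Real.exp |logKernel r x y| ≤ 2 / |⟪r⁻¹ • x, w⟫| := by
  set t := |⟪r⁻¹ • x, w⟫| with ht
  have htr : t * r = |⟪x - y, w⟫| := by
    rw [ht, inner_smul_left, inner_sub_left, hyw, abs_mul]
    simp [abs_of_pos hr]
    field_simp
  have htle : t * r ≤ ‖x - y‖ := by
    rw [htr]; simpa [hw] using abs_real_inner_le_norm (x - y) w
  have hxy : 0 < ‖x - y‖ := lt_of_lt_of_le (by positivity) htle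
  have ht1 : t ≤ 1 := by
    have := abs_real_inner_le_norm (r⁻¹ • x) w
    rwa [hw, norm_smul, hx, Real.norm_of_nonneg (by positivity), inv_mul_cancel₀ hr.ne',
      mul_one] at this
  have hmax : 0 < max ‖y‖ r := lt_max_of_lt_right hr
  have h2 : 2 ≤ 2 / t := by rw [le_div_iff₀ h0]; linarith
  have hup : ‖x - y‖ ≤ ‖y‖ + r := by linarith [norm_sub_le x y]
  have hlow : ‖y‖ - r ≤ ‖x - y‖ := by
    rw [← hx, norm_sub_rev]; exact norm_sub_norm_le y x
  rcases abs_cases (logKernel r x y) with ⟨h, -⟩ | ⟨h, -⟩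
  · rw [h, logKernel, Real.exp_log (by positivity), div_le_div_iff₀ hxy h0]
    rcases le_total ‖y‖ (2 * r) with hy | hy
    · have : max ‖y‖ r ≤ 2 * r := max_le hy (by linarith)
      nlinarith
    · rw [max_eq_left (by linarith)]
      nlinarith [norm_nonneg y]
  · rw [h, logKernel, Real.exp_neg, Real.exp_log (by positivity), inv_div]
    refine le_trans ?_ h2
    rw [div_le_iff₀ hmax]
    linarith [le_max_left ‖y‖ r, le_max_right ‖y‖ r]

lemma ofReal_exp_half_abs_logKernel_le {n : ℕ} {r : ℝ} (hr : 0 < r) {x y w : E n} (hx : ‖x‖ = r)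
    (hw : ‖w‖ = 1) (hyw : ⟪y, w⟫ = 0) :
    ENNReal.ofReal (Real.exp (|logKernel r x y| / 2)) ≤
      2 * ‖⟪r⁻¹ • x, w⟫‖ₑ ^ (-(1 / 2) : ℝ) := by
  rcases (abs_nonneg ⟪r⁻¹ • x, w⟫).eq_or_lt with h0 | h0
  · rw [abs_eq_zero.1 h0.symm]
    simp [ENNReal.zero_rpow_of_neg, ENNReal.mul_top]
  · rw [Real.enorm_eq_ofReal_abs, ENNReal.ofReal_rpow_of_pos h0]
    refine (ENNReal.ofReal_le_ofReal (q := 2 * |⟪r⁻¹ • x, w⟫| ^ (-(1 / 2) : ℝ)) ?_).trans_eq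
      (by rw [ENNReal.ofReal_mul zero_le_two, ENNReal.ofReal_ofNat])
    have h := exp_abs_logKernel_le hr hx hw hyw h0
    have h2 : Real.exp (|logKernel r x y| / 2) = Real.exp |logKernel r x y| ^ (1 / 2 : ℝ) := by
      rw [← Real.exp_mul]; ring_nf
    rw [h2]
    refine (Real.rpow_le_rpow (Real.exp_nonneg _) h (by norm_num)).trans ?_
    rw [Real.div_rpow zero_le_two h0.le, Real.rpow_neg h0.le, div_eq_mul_inv]
    refine mul_le_mul_of_nonneg_right ?_ (by positivity)
    exact (Real.rpow_le_rpow_of_exponent_le one_le_two (by norm_num : (1 / 2 : ℝ) ≤ 1)).trans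
      (by norm_num)

lemma lintegral_exp_half_abs_logKernel_le {n : ℕ} (hn : 2 ≤ n) {r : ℝ} (hr : 0 < r)
    {σ : Measure (E n)} [IsProbabilityMeasure σ] (hσ : ∀ᵐ x ∂σ, ‖x‖ = r)
    (hinv : ∀ L : E n ≃ₗᵢ[ℝ] E n, MeasurePreserving L σ σ) (ν : Measure (E n)) [SFinite ν] :
    ∫⁻ x, ∫⁻ y, ENNReal.ofReal (Real.exp (|logKernel r x y| / 2)) ∂ν ∂σ ≤
      2 * innerBound n * ν Set.univ := by
  have hm := measurable_logKernel (n := n) r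
  rw [lintegral_lintegral_swap (by unfold Function.uncurry; fun_prop), ← lintegral_const]
  refine lintegral_mono fun y => ?_
  obtain ⟨w, hw, hyw⟩ := exists_unit_orthogonal hn y
  refine (lintegral_mono_ae (g := fun x => 2 * ‖⟪r⁻¹ • x, w⟫‖ₑ ^ (-(1 / 2) : ℝ)) ?_).trans ?_
  · filter_upwards [hσ] with x hx
    exact ofReal_exp_half_abs_logKernel_le hr hx hw hyw
  · rw [lintegral_const_mul _ (by fun_prop)]
    gcongr
    exact lintegral_enorm_inner_le hr hσ hinv hw

lemma abs_logKernel_le_of_norm_le {n : ℕ} {r R : ℝ} (hR : 0 < R) (hRr : 2 * R ≤ r) {x y : E n}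
    (hx : ‖x‖ = r) (hy : ‖y‖ ≤ R) : |logKernel r x y| ≤ 2 * R / r := by
  have hr : 0 < r := by linarith
  have hup : ‖x - y‖ ≤ r + R := by linarith [norm_sub_le x y]
  have hlow : r - R ≤ ‖x - y‖ := by linarith [norm_sub_norm_le x y]
  have hxy : 0 < ‖x - y‖ := by linarith
  rw [logKernel, max_eq_right (by linarith), abs_le]
  constructor
  · rw [neg_le, ← Real.log_inv, inv_div]
    refine (Real.log_le_sub_one_of_pos (by positivity)).trans ?_
    rw [sub_le_iff_le_add, div_add_one hr.ne', div_le_div_iff_of_pos_right hr]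
    linarith
  · refine (Real.log_le_sub_one_of_pos (by positivity)).trans ?_
    rw [sub_le_iff_le_add, div_add_one hr.ne', div_le_div_iff₀ hxy hr]
    nlinarith

/-- Jensen's inequality for measures of mass at most one. -/
lemma ofReal_exp_integral_le {α : Type*} [MeasurableSpace α] (μ : Measure α) (hμ : μ Set.univ ≤ 1)
    {φ : α → ℝ} (hφ : AEMeasurable φ μ) :
    ENNReal.ofReal (Real.exp (∫ a, φ a ∂μ)) ≤ 1 + ∫⁻ a, ENNReal.ofReal (Real.exp (φ a)) ∂μ := by
  have : IsFiniteMeasure μ := ⟨hμ.trans_lt ENNReal.one_lt_top⟩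
  by_cases htop : ∫⁻ a, ENNReal.ofReal (Real.exp (φ a)) ∂μ = ∞
  · simp [htop]
  by_cases hint : Integrable φ μ
  swap
  · simp [integral_undef hint]
  have hexp : Integrable (fun a => Real.exp (φ a)) μ :=
    (lintegral_ofReal_ne_top_iff_integrable (by fun_prop)
      (ae_of_all _ fun a => Real.exp_nonneg _)).1 htop
  rw [← ofReal_integral_eq_lintegral_ofReal hexp (ae_of_all _ fun a => Real.exp_nonneg _),
    ← ENNReal.ofReal_one, ← ENNReal.ofReal_add zero_le_one
    (integral_nonneg fun a => Real.exp_nonneg _)]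
  refine ENNReal.ofReal_le_ofReal ?_
  set A := ∫ a, φ a ∂μ
  set θ := μ.real Set.univ
  have hθ : θ ≤ 1 := ENNReal.toReal_le_of_le_ofReal zero_le_one (by simpa using hμ)
  have h1 : Real.exp A * (θ + A - A * θ) ≤ ∫ a, Real.exp (φ a) ∂μ := by
    have : Real.exp A * (θ + A - A * θ) = ∫ a, Real.exp A * (1 + φ a - A) ∂μ := by
      rw [integral_const_mul, integral_sub (by fun_prop) (by fun_prop),
        integral_add (by fun_prop) hint]
      simp [A, θ]
      ring
    rw [this]
    refine integral_mono (by fun_prop) hexp fun a => ?_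
    have h := Real.add_one_le_exp (φ a - A)
    have h3 : Real.exp (φ a) = Real.exp A * Real.exp (φ a - A) := by
      rw [← Real.exp_add]; ring_nf
    simp only [h3]
    gcongr
    linarith
  have h2 : Real.exp A * (1 - A) ≤ 1 := by
    have h := Real.add_one_le_exp (-A)
    calc Real.exp A * (1 - A) ≤ Real.exp A * Real.exp (-A) := by gcongr; linarith
      _ = 1 := by rw [← Real.exp_add]; simp
  have hθ0 : 0 ≤ θ := measureReal_nonneg
  nlinarith [mul_le_mul_of_nonneg_left h2 (sub_nonneg.2 hθ)]

lemma measurable_lintegral_exp_half_abs_logKernel {n : ℕ} (r : ℝ) (ν : Measure (E n)) [SFinite ν] :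
    Measurable fun x : E n =>
      ∫⁻ y, ENNReal.ofReal (Real.exp (|logKernel r x y| / 2)) ∂ν := by
  have hm := measurable_logKernel (n := n) r
  have h : Measurable fun z : E n × E n =>
      ENNReal.ofReal (Real.exp (|logKernel r z.1 z.2| / 2)) := by fun_prop
  exact h.lintegral_prod_right'

lemma ae_integrable_logKernel {n : ℕ} (hn : 2 ≤ n) {r : ℝ} (hr : 0 < r)
    {σ : Measure (E n)} [IsProbabilityMeasure σ] (hσ : ∀ᵐ x ∂σ, ‖x‖ = r)
    (hinv : ∀ L : E n ≃ₗᵢ[ℝ] E n, MeasurePreserving L σ σ) (ν : Measure (E n))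
    [IsFiniteMeasure ν] : ∀ᵐ x ∂σ, Integrable (logKernel r x) ν := by
  have hlt := (lintegral_exp_half_abs_logKernel_le hn hr hσ hinv ν).trans_lt
    (ENNReal.mul_lt_top (ENNReal.mul_lt_top (by simp) (innerBound_lt_top n))
      (measure_lt_top ν Set.univ))
  have hmeas := measurable_lintegral_exp_half_abs_logKernel r ν
  filter_upwards [ae_lt_top hmeas hlt.ne] with x hx
  have hmx := measurable_logKernel_right r x
  have hexp : Integrable (fun y => Real.exp (|logKernel r x y| / 2)) ν :=
    (lintegral_ofReal_ne_top_iff_integrable (by fun_prop)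
      (ae_of_all _ fun a => Real.exp_nonneg _)).1 hx.ne
  refine (hexp.const_mul 2).mono' hmx.aestronglyMeasurable (ae_of_all _ fun y => ?_)
  rw [Real.norm_eq_abs]
  linarith [Real.add_one_le_exp (|logKernel r x y| / 2)]

lemma lintegral_exp_integral_abs_logKernel_le {n : ℕ} (hn : 2 ≤ n) {r R p : ℝ} (hR : 0 < R)
    (hRr : 2 * R ≤ r) (hp : 0 ≤ p)
    {σ : Measure (E n)} [IsProbabilityMeasure σ] (hσ : ∀ᵐ x ∂σ, ‖x‖ = r)
    (hinv : ∀ L : E n ≃ₗᵢ[ℝ] E n, MeasurePreserving L σ σ) (ν : Measure (E n))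
    [IsFiniteMeasure ν]
    (hν : ENNReal.ofReal (2 * p) * ν (Metric.closedBall 0 R)ᶜ ≤ 1) :
    ∫⁻ x, ENNReal.ofReal (Real.exp (p * ∫ y, |logKernel r x y| ∂ν)) ∂σ ≤
      ENNReal.ofReal (Real.exp (p * (2 * R / r * ν.real Set.univ))) *
        (1 + 2 * innerBound n * (ENNReal.ofReal (2 * p) * ν (Metric.closedBall 0 R)ᶜ)) := by
  have hr : 0 < r := by linarith
  set B := Metric.closedBall (0 : E n) R
  set ρ : Measure (E n) := ENNReal.ofReal (2 * p) • ν.restrict Bᶜ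
  have hρ : ρ Set.univ = ENNReal.ofReal (2 * p) * ν Bᶜ := by simp [ρ]
  have : IsFiniteMeasure ρ := ⟨by rw [hρ]; exact hν.trans_lt ENNReal.one_lt_top⟩
  have hmeas := measurable_lintegral_exp_half_abs_logKernel r ρ
  calc ∫⁻ x, ENNReal.ofReal (Real.exp (p * ∫ y, |logKernel r x y| ∂ν)) ∂σ
      ≤ ∫⁻ x, ENNReal.ofReal (Real.exp (p * (2 * R / r * ν.real Set.univ))) *
          (1 + ∫⁻ y, ENNReal.ofReal (Real.exp (|logKernel r x y| / 2)) ∂ρ) ∂σ := by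
        refine lintegral_mono_ae ?_
        filter_upwards [ae_integrable_logKernel hn hr hσ hinv ν, hσ] with x hx hxr
        have hmx := measurable_logKernel_right r x
        have hnear : ∫ y in B, |logKernel r x y| ∂ν ≤ 2 * R / r * ν.real Set.univ := by
          refine (setIntegral_mono_on hx.abs.integrableOn (g := fun _ => 2 * R / r) (by simp)
            measurableSet_closedBall fun y hy =>
              abs_logKernel_le_of_norm_le hR hRr hxr (by simpa [B] using hy)).trans ?_
          rw [setIntegral_const, smul_eq_mul, mul_comm]
          exact mul_le_mul_of_nonneg_left (measureReal_mono (Set.subset_univ _)) (by positivity)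
        have hfar : p * ∫ y in Bᶜ, |logKernel r x y| ∂ν = ∫ y, |logKernel r x y| / 2 ∂ρ := by
          rw [integral_smul_measure, integral_div, ENNReal.toReal_ofReal (by positivity),
            smul_eq_mul]
          ring
        refine le_trans ?_ (mul_le_mul_right (ofReal_exp_integral_le ρ (hρ.trans_le hν)
          (φ := fun y => |logKernel r x y| / 2) (by fun_prop)) _)
        rw [← ENNReal.ofReal_mul (Real.exp_nonneg _), ← Real.exp_add, ← hfar,
          ← integral_add_compl (measurableSet_closedBall : MeasurableSet B) hx.abs, mul_add]
        gcongr
    _ ≤ _ := by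
        rw [lintegral_const_mul _ (by fun_prop), lintegral_add_left measurable_const]
        gcongr
        · simp
        · rw [← hρ]
          exact lintegral_exp_half_abs_logKernel_le hn hr hσ hinv ρ
/-- The part of the unit sphere in the half-space opposite to `v` has finite `(n-1)`-dimensional
Hausdorff measure. -/
lemma hausdorffMeasure_halfSphere_lt_top {n : ℕ} (hn : 1 ≤ n) (v : E n) (hv : ‖v‖ = 1) :
    μH[(n : ℝ) - 1] (Metric.sphere (0 : E n) 1 ∩ {x | ⟪v, x⟫ ≤ 0}) < ∞ := by
  set S := Metric.sphere (0 : E n) 1 ∩ {x | ⟪v, x⟫ ≤ 0}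
  have hSc : IsCompact S := (isCompact_sphere _ _).inter_right
    (isClosed_le (by fun_prop) continuous_const)
  have hcont : ContinuousOn (stereoToFun v) S := by
    refine (continuousOn_stereoToFun (v := v)).mono fun x hx => ?_
    have : ⟪v, x⟫ ≤ 0 := hx.2
    simp only [Set.mem_ofPred_eq, innerSL_apply_apply]
    linarith
  have hK : IsCompact (stereoToFun v '' S) := hSc.image_of_continuousOn hcont
  have hg : ContDiff ℝ 1 (stereoInvFunAux v ∘ ((↑) : (ℝ ∙ v)ᗮ → E n)) :=
    contDiff_stereoInvFunAux.comp (ℝ ∙ v)ᗮ.subtypeL.contDiff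
  obtain ⟨C, hC⟩ := (hg.locallyLipschitz.locallyLipschitzOn
    (s := stereoToFun v '' S)).exists_lipschitzOnWith_of_compact hK
  have hsub : S ⊆ (stereoInvFunAux v ∘ ((↑) : (ℝ ∙ v)ᗮ → E n)) '' (stereoToFun v '' S) := by
    intro x hx
    refine ⟨stereoToFun v x, ⟨x, hx, rfl⟩, ?_⟩
    have hxv : x ≠ v := by
      rintro rfl
      have : ⟪x, x⟫ ≤ 0 := hx.2
      rw [real_inner_self_eq_norm_sq, hv] at this
      norm_num at this
    exact congrArg Subtype.val (stereo_left_inv hv (x := ⟨x, hx.1⟩) hxv)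
  have hv0 : v ≠ 0 := by rintro rfl; simp at hv
  obtain ⟨m, rfl⟩ : ∃ m, n = m + 1 := ⟨n - 1, by omega⟩
  have : Fact (Module.finrank ℝ (E (m + 1)) = m + 1) := ⟨by simp⟩
  have hfin : ((m + 1 : ℕ) : ℝ) - 1 = (Module.finrank ℝ (ℝ ∙ v)ᗮ : ℕ) := by
    rw [Submodule.finrank_orthogonal_span_singleton (𝕜 := ℝ) (n := m) hv0]; simp
  refine (measure_mono hsub).trans_lt ((hC.hausdorffMeasure_image_le (by simp)).trans_lt ?_)
  rw [hfin]
  exact ENNReal.mul_lt_top (by simp) hK.measure_lt_top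

lemma hausdorffMeasure_sphere_lt_top {n : ℕ} (hn : 1 ≤ n) {r : ℝ} (hr : 0 < r) :
    μH[(n : ℝ) - 1] (Metric.sphere (0 : E n) r) < ∞ := by
  have hn' : (0 : ℝ) ≤ (n : ℝ) - 1 := by
    have : (1 : ℝ) ≤ n := by exact_mod_cast hn
    linarith
  set v : E n := EuclideanSpace.single ⟨0, hn⟩ 1
  have hv : ‖v‖ = 1 := by simp [v]
  have hs : Metric.sphere (0 : E n) r = r • Metric.sphere (0 : E n) 1 := by
    rw [smul_sphere' hr.ne']; simp [abs_of_pos hr]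
  rw [hs, Measure.hausdorffMeasure_smul₀ hn' hr.ne']
  refine ENNReal.mul_lt_top (by simp) ?_
  refine (measure_mono (t := (Metric.sphere (0 : E n) 1 ∩ {x | ⟪v, x⟫ ≤ 0}) ∪
    (Metric.sphere (0 : E n) 1 ∩ {x | ⟪-v, x⟫ ≤ 0})) fun x hx => ?_).trans_lt
    (measure_union_lt_top (hausdorffMeasure_halfSphere_lt_top hn v hv)
      (hausdorffMeasure_halfSphere_lt_top hn (-v) (by simpa using hv)))
  rcases le_total ⟪v, x⟫ 0 with h | h
  · exact Or.inl ⟨hx, h⟩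
  · exact Or.inr ⟨hx, by simpa using h⟩

lemma hausdorffMeasure_sphere_pos {n : ℕ} (hn : 1 ≤ n) {r : ℝ} (hr : 0 < r) :
    0 < μH[(n : ℝ) - 1] (Metric.sphere (0 : E n) r) := by
  have hn' : (0 : ℝ) ≤ (n : ℝ) - 1 := by
    have : (1 : ℝ) ≤ n := by exact_mod_cast hn
    linarith
  set v : E n := EuclideanSpace.single ⟨0, hn⟩ 1
  have hv : ‖v‖ = 1 := by simp [v]
  have hv0 : v ≠ 0 := by intro h; simp [h] at hv
  refine lt_of_lt_of_le ?_
    (hausdorffMeasure_orthogonalProjectionOnto_le (ℝ ∙ v)ᗮ ((n : ℝ) - 1) _ hn')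
  have hsub : Metric.ball (0 : (ℝ ∙ v)ᗮ) r ⊆
      (ℝ ∙ v)ᗮ.orthogonalProjectionOnto '' Metric.sphere (0 : E n) r := by
    intro z hz
    have hz' : ‖z‖ < r := by simpa using hz
    have hnn : 0 ≤ r ^ 2 - ‖z‖ ^ 2 := by nlinarith [norm_nonneg z]
    refine ⟨(z : E n) + √(r ^ 2 - ‖z‖ ^ 2) • v, ?_, ?_⟩
    · have hzv : ⟪(z : E n), v⟫ = 0 := Submodule.mem_orthogonal_singleton_iff_inner_left.1 z.2
      rw [mem_sphere_zero_iff_norm, ← sq_eq_sq₀ (norm_nonneg _) hr.le, norm_add_sq_real,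
        inner_smul_right, hzv, norm_smul, hv, Real.norm_of_nonneg (Real.sqrt_nonneg _), mul_one,
        Real.sq_sqrt hnn]
      simp
    · rw [map_add, map_smul, Submodule.orthogonalProjectionOnto_mem_subspace_eq_self]
      have : (ℝ ∙ v)ᗮ.orthogonalProjectionOnto v = 0 := by
        simp
      rw [this]; simp
  refine lt_of_lt_of_le ?_ (measure_mono hsub)
  obtain ⟨m, rfl⟩ : ∃ m, n = m + 1 := ⟨n - 1, by omega⟩
  have : Fact (Module.finrank ℝ (E (m + 1)) = m + 1) := ⟨by simp⟩
  have hfin : ((m + 1 : ℕ) : ℝ) - 1 = (Module.finrank ℝ (ℝ ∙ v)ᗮ : ℕ) := by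
    rw [Submodule.finrank_orthogonal_span_singleton (𝕜 := ℝ) (n := m) hv0]; simp
  rw [hfin]
  exact Metric.measure_ball_pos _ _ hr

/-- The normalized surface measure on the sphere of radius `r`. -/
noncomputable def sphereMeasure (n : ℕ) (r : ℝ) : Measure (E n) :=
  (μH[(n : ℝ) - 1] (Metric.sphere (0 : E n) r))⁻¹ •
    μH[(n : ℝ) - 1].restrict (Metric.sphere (0 : E n) r)

lemma isProbabilityMeasure_sphereMeasure {n : ℕ} (hn : 1 ≤ n) {r : ℝ} (hr : 0 < r) :
    IsProbabilityMeasure (sphereMeasure n r) := by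
  constructor
  simpa [sphereMeasure] using ENNReal.inv_mul_cancel (hausdorffMeasure_sphere_pos hn hr).ne'
    (hausdorffMeasure_sphere_lt_top hn hr).ne

lemma ae_norm_eq_sphereMeasure (n : ℕ) (r : ℝ) : ∀ᵐ x ∂sphereMeasure n r, ‖x‖ = r := by
  refine Measure.ae_smul_measure ?_ _
  filter_upwards [ae_restrict_mem (Metric.isClosed_sphere.measurableSet)] with x hx
  simpa using hx

lemma measurePreserving_sphereMeasure {n : ℕ} (r : ℝ) (L : E n ≃ₗᵢ[ℝ] E n) :
    MeasurePreserving L (sphereMeasure n r) (sphereMeasure n r) := by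
  have h := (L.toIsometryEquiv.measurePreserving_hausdorffMeasure ((n : ℝ) - 1)).restrict_preimage
    (s := Metric.sphere (0 : E n) r) Metric.isClosed_sphere.measurableSet
  have hs : L.toIsometryEquiv ⁻¹' Metric.sphere (0 : E n) r = Metric.sphere (0 : E n) r := by
    ext x; simp
  rw [hs] at h
  exact h.smul_measure _

/-- A logarithmic potential is, on almost all of a sphere, close to a constant up to the potential
of the absolute value of its density. The integral in the representation formula may fail to
converge absolutely, in which case the potential is constant almost everywhere on the sphere. The
additive constant may stand inside the integral (`A`) or outside of it (`C`). -/
lemma exists_ae_abs_sub_le {n : ℕ} (hn : 2 ≤ n) {r : ℝ} (hr : 0 < r)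
    {σ : Measure (E n)} [IsProbabilityMeasure σ] (hσ : ∀ᵐ x ∂σ, ‖x‖ = r)
    (hinv : ∀ L : E n ≃ₗᵢ[ℝ] E n, MeasurePreserving L σ σ) {u f : E n → ℝ} (hf : Integrable f)
    {c A C : ℝ} (hu : ∀ x, u x = c * (∫ y, (Real.log (‖y‖ / ‖x - y‖) * f y + A)) + C) :
    ∃ d, ∀ᵐ x ∂σ, |u x - d| ≤
      |c| * ∫ y, |logKernel r x y| ∂(volume.withDensity fun y => ‖f y‖ₑ) := by
  have : Nontrivial (E n) := by
    have : Nontrivial (Fin n) := Fin.nontrivial_iff_two_le.2 hn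
    infer_instance
  have hfm : AEMeasurable (fun y => ‖f y‖ₑ) volume := hf.aemeasurable.enorm
  have hfin : ∀ᵐ y, ‖f y‖ₑ < ∞ := ae_of_all _ fun y => by simp
  have : IsFiniteMeasure (volume.withDensity fun y => ‖f y‖ₑ) :=
    isFiniteMeasure_withDensity hf.2.ne
  have hK : ∀ᵐ x ∂σ, Integrable (fun y => logKernel r x y * f y) := by
    filter_upwards [ae_integrable_logKernel hn hr hσ hinv
      (volume.withDensity fun y => ‖f y‖ₑ)] with x hx
    rw [integrable_withDensity_iff_integrable_smul₀' hfm hfin] at hx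
    refine hx.congr' ((measurable_logKernel_right r x).aestronglyMeasurable.mul
      hf.aestronglyMeasurable) (ae_of_all _ fun y => ?_)
    simp [norm_mul, mul_comm]
  have hsplit : ∀ x : E n, (fun y => Real.log (‖y‖ / ‖x - y‖) * f y + A) =ᵐ[volume]
      fun y => logKernel r x y * f y - (Real.log (max ‖y‖ r / ‖y‖) * f y - A) := by
    intro x
    filter_upwards [Measure.ae_ne volume 0, Measure.ae_ne volume x] with y h0 hx
    have h1 : ‖y‖ ≠ 0 := norm_ne_zero_iff.2 h0
    have h2 : ‖x - y‖ ≠ 0 := norm_ne_zero_iff.2 (sub_ne_zero.2 hx.symm)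
    have h3 : max ‖y‖ r ≠ 0 := (lt_max_of_lt_right hr).ne'
    rw [logKernel, Real.log_div h1 h2, Real.log_div h3 h2, Real.log_div h3 h1]
    ring
  by_cases h : Integrable fun y => Real.log (max ‖y‖ r / ‖y‖) * f y - A
  · refine ⟨C - c * ∫ y, (Real.log (max ‖y‖ r / ‖y‖) * f y - A), ?_⟩
    filter_upwards [hK] with x hx
    rw [hu x, integral_congr_ae (hsplit x), integral_sub hx h,
      integral_withDensity_eq_integral_toReal_smul₀ hfm hfin]
    have : ∀ a b : ℝ, c * (a - b) + C - (C - c * b) = c * a := fun a b => by ring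
    rw [this, abs_mul]
    refine mul_le_mul_of_nonneg_left ((abs_integral_le_integral_abs).trans_eq ?_) (abs_nonneg _)
    refine integral_congr_ae (ae_of_all _ fun y => ?_)
    simp [abs_mul, mul_comm]
  · refine ⟨C, ?_⟩
    filter_upwards [hK] with x hx
    have hni : ¬ Integrable fun y => Real.log (‖y‖ / ‖x - y‖) * f y + A := by
      rw [integrable_congr (hsplit x)]
      intro hi
      refine h ((hx.sub hi).congr (ae_of_all _ fun y => ?_))
      simp
    rw [hu x, integral_undef hni]
    simp only [mul_zero, zero_add, sub_self, abs_zero]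
    positivity

lemma integral_exp_sub_integral_bounds {α : Type*} [MeasurableSpace α] {σ : Measure α}
    [IsProbabilityMeasure σ] {g : α → ℝ} (hg : AEMeasurable g σ) {M : ℝ}
    (hM : ∀ᵐ x ∂σ, |g x| ≤ M) {k : ℝ} (hk : 0 ≤ k) (d : ℝ) :
    1 ≤ ∫ x, Real.exp (k * (g x - ∫ z, g z ∂σ)) ∂σ ∧
      ∫ x, Real.exp (k * (g x - ∫ z, g z ∂σ)) ∂σ ≤ (∫ x, Real.exp (k * |g x - d|) ∂σ) ^ 2 := by
  have hgi : Integrable g σ := Integrable.of_bound hg.aestronglyMeasurable M hM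
  have hexp1 : ∀ a : ℝ, Integrable (fun x => Real.exp (k * (g x - a))) σ := fun a => by
    refine Integrable.of_bound (by fun_prop) (Real.exp (k * (M + |a|))) ?_
    filter_upwards [hM] with x hx
    rw [Real.norm_of_nonneg (Real.exp_nonneg _)]
    gcongr
    linarith [neg_abs_le a, le_abs_self (g x)]
  have hexp2 : Integrable (fun x => Real.exp (k * |g x - d|)) σ := by
    refine Integrable.of_bound (by fun_prop) (Real.exp (k * (M + |d|))) ?_
    filter_upwards [hM] with x hx
    rw [Real.norm_of_nonneg (Real.exp_nonneg _)]
    gcongr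
    linarith [abs_sub (g x) d]
  set a := ∫ z, g z ∂σ
  constructor
  · calc (1 : ℝ) = ∫ x, (k * (g x - a) + 1) ∂σ := by
          rw [integral_add (by fun_prop) (by fun_prop), integral_const_mul,
            integral_sub hgi (by fun_prop)]
          simp [a]
      _ ≤ _ := integral_mono (by fun_prop) (hexp1 a) fun x => Real.add_one_le_exp _
  · have hsub : Integrable (fun x => |g x - d|) σ := (hgi.sub (integrable_const d)).abs
    have hjen : Real.exp (k * ∫ x, |g x - d| ∂σ) ≤ ∫ x, Real.exp (k * |g x - d|) ∂σ := by
      rw [← integral_const_mul]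
      exact convexOn_exp.map_integral_le Real.continuous_exp.continuousOn isClosed_univ
        (ae_of_all _ fun x => Set.mem_univ _) (hsub.const_mul k) hexp2
    have hmean : d - a ≤ ∫ x, |g x - d| ∂σ := by
      have : d - a = ∫ x, (d - g x) ∂σ := by
        rw [integral_sub (by fun_prop) hgi]; simp [a]
      rw [this]
      refine integral_mono ((integrable_const d).sub hgi) hsub fun x => ?_
      simpa [abs_sub_comm] using le_abs_self (d - g x)
    calc ∫ x, Real.exp (k * (g x - a)) ∂σ
        ≤ ∫ x, Real.exp (k * ∫ x, |g x - d| ∂σ) * Real.exp (k * |g x - d|) ∂σ := by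
          refine integral_mono (hexp1 a) (hexp2.const_mul _) fun x => ?_
          simp only
          rw [← Real.exp_add, ← mul_add]
          gcongr
          linarith [le_abs_self (g x - d)]
      _ = Real.exp (k * ∫ x, |g x - d| ∂σ) * ∫ x, Real.exp (k * |g x - d|) ∂σ :=
          integral_const_mul _ _
      _ ≤ _ := by
          rw [sq]
          exact mul_le_mul_of_nonneg_right hjen (integral_nonneg fun x => Real.exp_nonneg _)

lemma average_exp_bounds {n : ℕ} (hn : 2 ≤ n) {u f : E n → ℝ} (hcont : Continuous u)
    (hf : Integrable f) {c A C : ℝ}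
    (hu : ∀ x, u x = c * (∫ y, (Real.log (‖y‖ / ‖x - y‖) * f y + A)) + C) {k : ℝ} (hk : 0 ≤ k)
    {r R : ℝ} (hR : 0 < R) (hRr : 2 * R ≤ r) {ν : Measure (E n)}
    (hν : ν = volume.withDensity fun y => ‖f y‖ₑ)
    (hsmall : ENNReal.ofReal (2 * (k * |c|)) * ν (Metric.closedBall 0 R)ᶜ ≤ 1) :
    1 ≤ ∫ x, Real.exp (k * (u x - ∫ z, u z ∂sphereMeasure n r)) ∂sphereMeasure n r ∧
    ∫ x, Real.exp (k * (u x - ∫ z, u z ∂sphereMeasure n r)) ∂sphereMeasure n r ≤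
      (Real.exp (k * |c| * (2 * R / r * ν.real Set.univ)) *
        (1 + (2 * innerBound n *
          (ENNReal.ofReal (2 * (k * |c|)) * ν (Metric.closedBall 0 R)ᶜ)).toReal)) ^ 2 := by
  have hr : 0 < r := by linarith
  have : IsProbabilityMeasure (sphereMeasure n r) :=
    isProbabilityMeasure_sphereMeasure (by omega) hr
  have : IsFiniteMeasure ν := hν ▸ isFiniteMeasure_withDensity hf.2.ne
  have hσ := ae_norm_eq_sphereMeasure n r
  have hinv := measurePreserving_sphereMeasure (n := n) r
  obtain ⟨M, hM⟩ := (isCompact_sphere (0 : E n) r).exists_bound_of_continuousOn hcont.continuousOn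
  obtain ⟨d, hd⟩ := exists_ae_abs_sub_le hn hr hσ hinv hf hu
  rw [← hν] at hd
  have hb := integral_exp_sub_integral_bounds (σ := sphereMeasure n r) hcont.aemeasurable
    (M := M) (by filter_upwards [hσ] with x hx using hM x (by simpa using hx)) hk d
  refine ⟨hb.1, hb.2.trans ?_⟩
  gcongr
  have hX : 2 * innerBound n * (ENNReal.ofReal (2 * (k * |c|)) * ν (Metric.closedBall 0 R)ᶜ)
      ≠ ∞ := by
    have := innerBound_lt_top n
    finiteness
  rw [integral_eq_lintegral_of_nonneg_ae (ae_of_all _ fun x => Real.exp_nonneg _)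
    (by fun_prop)]
  refine ENNReal.toReal_le_of_le_ofReal (by positivity) ?_
  rw [ENNReal.ofReal_mul (Real.exp_nonneg _), ENNReal.ofReal_add zero_le_one ENNReal.toReal_nonneg,
    ENNReal.ofReal_toReal hX, ENNReal.ofReal_one]
  refine le_trans (lintegral_mono_ae ?_) (lintegral_exp_integral_abs_logKernel_le hn hR hRr
    (p := k * |c|) (by positivity) hσ hinv ν hsmall)
  filter_upwards [hd] with x hx
  refine ENNReal.ofReal_le_ofReal (Real.exp_le_exp.2 ?_)
  rw [mul_assoc]
  gcongr

theorem tendsto_average_exp {n : ℕ} (hn : 2 ≤ n) {u f : E n → ℝ} (hcont : Continuous u)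
    (hf : Integrable f) {c A C : ℝ}
    (hu : ∀ x, u x = c * (∫ y, (Real.log (‖y‖ / ‖x - y‖) * f y + A)) + C) {k : ℝ} (hk : 0 ≤ k) :
    Tendsto (fun r => ∫ x, Real.exp (k * (u x - ∫ z, u z ∂sphereMeasure n r)) ∂sphereMeasure n r)
      atTop (nhds 1) := by
  obtain ⟨ν, hν⟩ : ∃ ν : Measure (E n), ν = volume.withDensity fun y => ‖f y‖ₑ := ⟨_, rfl⟩
  have : IsFiniteMeasure ν := hν ▸ isFiniteMeasure_withDensity hf.2.ne
  have htail : Tendsto (fun R : ℝ => ν (Metric.closedBall 0 R)ᶜ) atTop (nhds 0) := by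
    simpa using tendsto_measure_compl_closedBall_of_isTightMeasureSet
      (isTightMeasureSet_singleton (μ := ν)) 0
  have h1 : Tendsto (fun R : ℝ => ENNReal.ofReal (2 * (k * |c|)) * ν (Metric.closedBall 0 R)ᶜ)
      atTop (nhds 0) := by
    have h := ENNReal.Tendsto.const_mul (a := ENNReal.ofReal (2 * (k * |c|))) htail
      (Or.inr ENNReal.ofReal_ne_top)
    rwa [mul_zero] at h
  have h2 : Tendsto (fun R : ℝ => (1 + (2 * innerBound n *
      (ENNReal.ofReal (2 * (k * |c|)) * ν (Metric.closedBall 0 R)ᶜ)).toReal) ^ 2)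
      atTop (nhds 1) := by
    have hI : 2 * innerBound n ≠ ∞ := ENNReal.mul_ne_top (by simp) (innerBound_lt_top n).ne
    have h := ENNReal.Tendsto.const_mul h1 (Or.inr hI)
    rw [mul_zero] at h
    have h' := (((ENNReal.tendsto_toReal ENNReal.zero_ne_top).comp h).const_add 1).pow 2
    rwa [ENNReal.toReal_zero, add_zero, one_pow] at h'
  refine tendsto_order.2 ⟨fun a ha => ?_, fun a ha => ?_⟩
  · obtain ⟨R, hR, hsm⟩ := ((eventually_gt_atTop (0 : ℝ)).and
      (h1.eventually_le_const zero_lt_one)).exists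
    filter_upwards [eventually_ge_atTop (2 * R)] with r hr
    exact ha.trans_le (average_exp_bounds hn hcont hf hu hk hR hr hν hsm).1
  · obtain ⟨R, hR, hsm, hlt⟩ := ((eventually_gt_atTop (0 : ℝ)).and
      ((h1.eventually_le_const zero_lt_one).and (h2.eventually_lt_const ha))).exists
    have hlim : Tendsto (fun r : ℝ => (Real.exp (k * |c| * (2 * R / r * ν.real Set.univ)) *
        (1 + (2 * innerBound n *
          (ENNReal.ofReal (2 * (k * |c|)) * ν (Metric.closedBall 0 R)ᶜ)).toReal)) ^ 2) atTop
        (nhds ((1 + (2 * innerBound n *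
          (ENNReal.ofReal (2 * (k * |c|)) * ν (Metric.closedBall 0 R)ᶜ)).toReal) ^ 2)) := by
      have h0 : Tendsto (fun r : ℝ => k * |c| * (2 * R / r * ν.real Set.univ)) atTop (nhds 0) := by
        simpa using ((tendsto_const_nhds.div_atTop tendsto_id).mul_const
          (ν.real Set.univ)).const_mul (k * |c|)
      have h3 := (Real.continuous_exp.tendsto 0).comp h0
      rw [Real.exp_zero] at h3
      simpa only [one_mul, Function.comp_def] using (h3.mul_const (1 + (2 * innerBound n *
          (ENNReal.ofReal (2 * (k * |c|)) * ν (Metric.closedBall 0 R)ᶜ)).toReal)).pow 2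
    filter_upwards [eventually_ge_atTop (2 * R), hlim.eventually_lt_const hlt] with r hr hra
    exact (average_exp_bounds hn hcont hf hu hk hR hr hν hsm).2.trans_lt hra

end

/-- `⨍_{∂B_r} e^{k(u−ū(r))} → 1` for every `k > 0`. -/
theorem stmt_7 (n : ℕ) (hn : 4 ≤ n) (hne : Even n)
    (u Q : E n → ℝ) (hu : ContDiff ℝ (⊤ : ℕ∞) u)
    (hint : Integrable (fun y => Q y * Real.exp (n * u y)))
    (hnorm : IsNormal n u Q) (k : ℝ) (hk : 0 < k) :
    Tendsto
      (fun r : ℝ =>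
        ⨍ x in Metric.sphere (0 : E n) r,
          Real.exp (k * (u x - ⨍ z in Metric.sphere (0 : E n) r, u z ∂μH[(n : ℝ) - 1]))
          ∂μH[(n : ℝ) - 1])
      atTop (nhds 1) := by
  obtain ⟨C, hC⟩ := hnorm
  simp only [setAverage_eq']
  exact tendsto_average_exp (C := 0) (by omega) hu.continuous hint
    (fun x => (hC x).trans (add_zero _).symm) hk.le
end
end

section
/- Let n ≥ 4 be even and let g = e^{2u}|dx|² be a normal conformal metric on ℝⁿ with finite total Q-curvature. If the scalar curvature satisfies R_g(x) ≥ C|x|^{−p} near infinity for some C > 0 and p ≥ −2, then ((n−1)!|𝕊ⁿ|/2)·max{0, 1 − p/2} ≤ ∫_{ℝⁿ} Q e^{nu} dx ≤ (n−1)!|𝕊ⁿ|. -/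
open MeasureTheory Filter

noncomputable section

open Topology

/-- Integration by parts against a compactly supported function. -/
lemma integral_fderiv_mul_eq_neg {n : ℕ} {w ρ : E n → ℝ} (hw : ContDiff ℝ 1 w)
    (hρ : ContDiff ℝ 1 ρ) (hc : HasCompactSupport ρ) (v : E n) :
    ∫ x, fderiv ℝ w x v * ρ x = -∫ x, w x * fderiv ℝ ρ x v := by
  have h1 : Continuous fun x => fderiv ℝ w x v :=
    (hw.continuous_fderiv one_ne_zero).clm_apply continuous_const
  have h2 : Continuous fun x => fderiv ℝ ρ x v :=
    (hρ.continuous_fderiv one_ne_zero).clm_apply continuous_const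
  have h3 : HasCompactSupport fun x => fderiv ℝ ρ x v := hc.fderiv_apply ℝ v
  have := integral_mul_fderiv_eq_neg_fderiv_mul_of_integrable (μ := volume) (f := w) (g := ρ)
    (v := v)
    ((h1.mul hρ.continuous).integrable_of_hasCompactSupport hc.mul_left)
    ((hw.continuous.mul h2).integrable_of_hasCompactSupport h3.mul_left)
    ((hw.continuous.mul hρ.continuous).integrable_of_hasCompactSupport hc.mul_left)
    (fun x _ => (hw.differentiable one_ne_zero) x) (fun x _ => (hρ.differentiable one_ne_zero) x)
  linarith

lemma clm_apply_eq_sum {n : ℕ} (L : E n →L[ℝ] ℝ) (x : E n) :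
    L x = ∑ i, x i * L (EuclideanSpace.single i 1) := by
  conv_lhs => rw [← (EuclideanSpace.basisFun (Fin n) ℝ).sum_repr x]
  simp [map_sum]

lemma hasFDerivAt_coord {n : ℕ} (i : Fin n) (x : E n) :
    HasFDerivAt (fun y : E n => y i) (EuclideanSpace.proj i : E n →L[ℝ] ℝ) x :=
  (EuclideanSpace.proj i : E n →L[ℝ] ℝ).hasFDerivAt

/-- The adjoint of the Euler field `x · ∇` is `-(n + x · ∇)`. -/
lemma integral_euler_mul {n : ℕ} {w ρ : E n → ℝ} (hw : ContDiff ℝ 1 w)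
    (hρ : ContDiff ℝ 1 ρ) (hc : HasCompactSupport ρ) :
    ∫ x, fderiv ℝ w x x * ρ x = ∫ x, w x * (-(n * ρ x + fderiv ℝ ρ x x)) := by
  have hcoord : ∀ i : Fin n, ContDiff ℝ 1 fun y : E n => y i := fun i =>
    (EuclideanSpace.proj i : E n →L[ℝ] ℝ).contDiff
  have h1 : ∀ v, Continuous fun x => fderiv ℝ w x v := fun v =>
    (hw.continuous_fderiv one_ne_zero).clm_apply continuous_const
  have hm : ∀ i : Fin n, ContDiff ℝ 1 fun x : E n => x i * ρ x := fun i => (hcoord i).mul hρ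
  have hmc : ∀ i : Fin n, HasCompactSupport fun x : E n => x i * ρ x := fun i => hc.mul_left
  calc ∫ x, fderiv ℝ w x x * ρ x
      = ∫ x, ∑ i, fderiv ℝ w x (EuclideanSpace.single i 1) * (x i * ρ x) := by
        congr 1; ext x
        rw [clm_apply_eq_sum, Finset.sum_mul]
        exact Finset.sum_congr rfl fun i _ => by ring
    _ = ∑ i, ∫ x, fderiv ℝ w x (EuclideanSpace.single i 1) * (x i * ρ x) :=
        integral_finsetSum _ fun i _ =>
          ((h1 _).mul (hm i).continuous).integrable_of_hasCompactSupport (hmc i).mul_left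
    _ = ∑ i, ∫ x, -(w x * fderiv ℝ (fun y : E n => y i * ρ y) x (EuclideanSpace.single i 1)) := by
        refine Finset.sum_congr rfl fun i _ => ?_
        rw [integral_fderiv_mul_eq_neg hw (hm i) (hmc i), integral_neg]
    _ = ∫ x, ∑ i, -(w x * fderiv ℝ (fun y : E n => y i * ρ y) x (EuclideanSpace.single i 1)) := by
        refine (integral_finsetSum _ fun i _ => ?_).symm
        refine Integrable.neg (Continuous.integrable_of_hasCompactSupport ?_
          ((hmc i).fderiv_apply ℝ _).mul_left)
        exact hw.continuous.mul (((hm i).continuous_fderiv one_ne_zero).clm_apply continuous_const)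
    _ = _ := by
        congr 1; ext x
        have : ∀ i : Fin n, fderiv ℝ (fun y : E n => y i * ρ y) x (EuclideanSpace.single i 1) =
            ρ x + x i * fderiv ℝ ρ x (EuclideanSpace.single i 1) := fun i => by
          rw [((hasFDerivAt_coord i x).fun_mul (hρ.differentiable one_ne_zero x).hasFDerivAt).fderiv]
          simp [add_comm]
        simp_rw [this]
        rw [clm_apply_eq_sum (fderiv ℝ ρ x) x, Finset.sum_neg_distrib, ← Finset.mul_sum,
          Finset.sum_add_distrib]
        simp
        ring

/-- Green's formula against a compactly supported function. -/
lemma integral_lap_mul {n : ℕ} {w φ : E n → ℝ} (hw : ContDiff ℝ 2 w)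
    (hφ : ContDiff ℝ 1 φ) (hc : HasCompactSupport φ) :
    ∫ x, lap w x * φ x = -∫ x, ∑ i, fderiv ℝ w x (EuclideanSpace.single i 1) *
      fderiv ℝ φ x (EuclideanSpace.single i 1) := by
  have hd : ∀ v, ContDiff ℝ 1 fun x => fderiv ℝ w x v := fun v =>
    (hw.fderiv_right (by norm_num)).clm_apply contDiff_const
  simp_rw [lap, Finset.sum_mul]
  rw [integral_finsetSum, integral_finsetSum, ← Finset.sum_neg_distrib]
  · exact Finset.sum_congr rfl fun i _ => integral_fderiv_mul_eq_neg (hd _) hφ hc _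
  · intro i _
    exact ((hd _).continuous.mul ((hφ.continuous_fderiv one_ne_zero).clm_apply
      continuous_const)).integrable_of_hasCompactSupport (hc.fderiv_apply ℝ _).mul_left
  · intro i _
    exact ((((hd _).continuous_fderiv one_ne_zero).clm_apply continuous_const).mul
      hφ.continuous).integrable_of_hasCompactSupport hc.mul_left

/-- If `|x|² ∇ψ = (x · ∇ψ) x`, as holds for radial `ψ`, then the weighted mean of `|x|² Δw` is
that of its radial part. -/
lemma integral_sq_norm_mul_lap {n : ℕ} {w ψ : E n → ℝ} (hw : ContDiff ℝ 2 w)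
    (hψ : ContDiff ℝ 1 ψ) (hc : HasCompactSupport ψ)
    (hrad : ∀ x i, ‖x‖ ^ 2 * fderiv ℝ ψ x (EuclideanSpace.single i 1) = x i * fderiv ℝ ψ x x) :
    ∫ x, lap w x * (‖x‖ ^ 2 * ψ x) = -∫ x, fderiv ℝ w x x * (2 * ψ x + fderiv ℝ ψ x x) := by
  rw [integral_lap_mul hw ((contDiff_norm_sq ℝ).mul hψ) hc.mul_left]
  congr 2; ext x
  have h : ∀ i : Fin n, fderiv ℝ (fun x => ‖x‖ ^ 2 * ψ x) x (EuclideanSpace.single i 1) =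
      x i * (2 * ψ x + fderiv ℝ ψ x x) := fun i => by
    rw [((hasStrictFDerivAt_norm_sq x).hasFDerivAt.fun_mul
      (hψ.differentiable one_ne_zero x).hasFDerivAt).fderiv]
    have := hrad x i
    simp [this, EuclideanSpace.inner_single_right]; ring
  simp_rw [h]
  rw [clm_apply_eq_sum (fderiv ℝ w x) x, Finset.sum_mul]
  exact Finset.sum_congr rfl fun i _ => by ring

/-- Differentiating a dilated mean in the logarithm of the dilation factor. -/
lemma hasDerivAt_integral_dilation {n : ℕ} {u ρ : E n → ℝ} (hu : ContDiff ℝ 1 u)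
    (hρ : Continuous ρ) (hc : HasCompactSupport ρ) (t : ℝ) :
    HasDerivAt (fun t => ∫ x, u (Real.exp t • x) * ρ x)
      (∫ x, fderiv ℝ (fun y => u (Real.exp t • y)) x x * ρ x) t := by
  have hF' : Continuous fun z : ℝ × E n =>
      fderiv ℝ u (Real.exp z.1 • z.2) (Real.exp z.1 • z.2) * ρ z.2 := by
    have h1 : Continuous fun z : ℝ × E n => Real.exp z.1 • z.2 := by fun_prop
    exact (((hu.continuous_fderiv one_ne_zero).comp h1).clm_apply h1).mul (hρ.comp continuous_snd)
  have hcomp : IsCompact (Metric.closedBall t 1 ×ˢ tsupport ρ) :=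
    (isCompact_closedBall t 1).prod hc
  obtain ⟨B, hB⟩ := hcomp.exists_bound_of_continuousOn hF'.continuousOn
  have key := (hasDerivAt_integral_of_dominated_loc_of_deriv_le (μ := volume)
    (F := fun t x => u (Real.exp t • x) * ρ x)
    (F' := fun t x => fderiv ℝ u (Real.exp t • x) (Real.exp t • x) * ρ x) (x₀ := t)
    (s := Metric.closedBall t 1) (bound := (tsupport ρ).indicator fun _ => B)
    (Metric.closedBall_mem_nhds t one_pos) ?_ ?_ ?_ ?_ ?_ ?_).2
  · have h : ∀ x : E n, fderiv ℝ (fun y => u (Real.exp t • y)) x x =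
        fderiv ℝ u (Real.exp t • x) (Real.exp t • x) := fun x => by
      rw [fderiv_comp_smul]; simp
    simpa only [h] using key
  · refine Eventually.of_forall fun s => Continuous.aestronglyMeasurable ?_
    exact (hu.continuous.comp (continuous_const_smul _)).mul hρ
  · exact ((hu.continuous.comp (continuous_const_smul _)).mul hρ).integrable_of_hasCompactSupport
      hc.mul_left
  · exact (hF'.comp (Continuous.prodMk_right t)).aestronglyMeasurable
  · refine Eventually.of_forall fun x s hs => ?_
    by_cases hx : x ∈ tsupport ρ
    · rw [Set.indicator_of_mem hx]
      exact hB (s, x) ⟨hs, hx⟩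
    · simp [Set.indicator_of_notMem hx, image_eq_zero_of_notMem_tsupport hx]
  · rw [integrable_indicator_iff (isClosed_tsupport ρ).measurableSet]
    exact integrableOn_const hc.measure_lt_top.ne
  · refine Eventually.of_forall fun x s _ => ?_
    have h1 : HasDerivAt (fun s => Real.exp s • x) (Real.exp s • x) s :=
      (Real.hasDerivAt_exp s).smul_const x
    exact ((hu.differentiable one_ne_zero _).hasFDerivAt.comp_hasDerivAt s h1).mul_const _

lemma le_add_mul_of_hasDerivAt_le {f f' : ℝ → ℝ} {a T : ℝ} (hf : ∀ t, HasDerivAt f (f' t) t)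
    (h : ∀ t, T ≤ t → f' t ≤ a) {t : ℝ} (ht : T ≤ t) : f t ≤ f T + a * (t - T) := by
  have hd : ∀ t, HasDerivAt (fun t => f t - a * t) (f' t - a) t := fun t => by
    simpa using (hf t).fun_sub ((hasDerivAt_id' t).const_mul a)
  have := antitoneOn_of_deriv_nonpos (convex_Ici T)
    (fun t _ => (hd t).continuousAt.continuousWithinAt)
    (fun t _ => (hd t).differentiableAt.differentiableWithinAt)
    (fun t ht => by
      rw [interior_Ici] at ht
      rw [(hd t).deriv]; linarith [h t (le_of_lt ht)])
    (Set.self_mem_Ici) (Set.mem_Ici.2 ht) ht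
  simp only at this
  linarith

lemma le_of_tendsto_div {V : ℝ → ℝ} {a A L : ℝ} (hlim : Tendsto (fun t => V t / t) atTop (𝓝 L))
    (h : ∀ᶠ t in atTop, V t ≤ A + a * t) : L ≤ a := by
  have h1 : Tendsto (fun t : ℝ => A / t + a) atTop (𝓝 (0 + a)) :=
    (tendsto_const_nhds.div_atTop tendsto_id).add_const a
  rw [zero_add] at h1
  refine le_of_tendsto_of_tendsto hlim h1 ?_
  filter_upwards [h, eventually_gt_atTop 0] with t ht h0
  have e : A / t + a = (A + a * t) / t := by field_simp
  rw [e]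
  gcongr

/-- Growth constraints for solutions of `V'' + mV' + (m/2)V'² + c exp(2V + bt) ≤ 0`. -/
lemma growth_of_riccati_le {V V₁ V₂ : ℝ → ℝ} {m c b T α : ℝ} (hm : 0 < m) (hc : 0 < c)
    (hV : ∀ t, HasDerivAt V (V₁ t) t) (hV₁ : ∀ t, HasDerivAt V₁ (V₂ t) t)
    (h : ∀ t, T ≤ t → V₂ t + m * V₁ t + m / 2 * V₁ t ^ 2 + c * Real.exp (2 * V t + b * t) ≤ 0)
    (hlim : Tendsto (fun t => V t / t) atTop (𝓝 (-α))) :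
    0 ≤ α ∧ α ≤ 2 ∧ b / 2 ≤ α := by
  have hW : ∀ t, HasDerivAt (fun t => V₁ t + m * V t) (V₂ t + m * V₁ t) t := fun t =>
    (hV₁ t).fun_add ((hV t).const_mul m)
  have hexp : ∀ t, 0 < c * Real.exp (2 * V t + b * t) := fun t => by positivity
  have hV₁ge : ∀ t, T ≤ t → -2 ≤ V₁ t := by
    intro s hs
    by_contra! hlt
    have hk : ∀ t, HasDerivAt (fun t => Real.exp (m / 2 * V t) * (V₁ t / 2 + 1))
        (Real.exp (m / 2 * V t) * (m / 2 * V₁ t) * (V₁ t / 2 + 1) +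
          Real.exp (m / 2 * V t) * (V₂ t / 2)) t := fun t =>
      (((hV t).const_mul (m / 2)).exp).fun_mul (((hV₁ t).div_const 2).add_const 1)
    have hkle : ∀ t, s ≤ t → Real.exp (m / 2 * V t) * (V₁ t / 2 + 1) ≤
        Real.exp (m / 2 * V s) * (V₁ s / 2 + 1) := fun t ht => by
      have := le_add_mul_of_hasDerivAt_le (a := 0) hk (fun t ht => ?_) ht
      · simpa using this
      · have h1 : Real.exp (m / 2 * V t) * (V₂ t + m * V₁ t + m / 2 * V₁ t ^ 2) ≤ 0 :=
          mul_nonpos_of_nonneg_of_nonpos (by positivity)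
            (by linarith [h t (hs.trans ht), hexp t])
        nlinarith [h1]
    set d := Real.exp (m / 2 * V s) * (V₁ s / 2 + 1) with hd
    have hdneg : d < 0 := mul_neg_of_pos_of_neg (Real.exp_pos _) (by linarith)
    have hy : ∀ t, HasDerivAt (fun t => Real.exp (m / 2 * V t + m * t) - d * Real.exp (m * t))
        (Real.exp (m / 2 * V t + m * t) * (m / 2 * V₁ t + m) -
          d * (Real.exp (m * t) * m)) t := fun t => by
      have h1 : HasDerivAt (fun t => m * t) m t := by
        simpa using (hasDerivAt_id' t).const_mul m
      exact ((((hV t).const_mul (m / 2)).fun_add h1).exp).fun_sub (h1.exp.const_mul d)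
    have hyle : ∀ t, s ≤ t → -d * Real.exp (m * t) ≤
        Real.exp (m / 2 * V s + m * s) - d * Real.exp (m * s) := fun t ht => by
      have := le_add_mul_of_hasDerivAt_le (a := 0) hy (fun t ht => ?_) ht
      · simp only [zero_mul, add_zero] at this
        linarith [Real.exp_pos (m / 2 * V t + m * t)]
      · have h1 := mul_le_mul_of_nonneg_left (hkle t ht)
          (mul_nonneg hm.le (Real.exp_pos (m * t)).le)
        rw [Real.exp_add]
        nlinarith [h1]
    have ht : Tendsto (fun t : ℝ => -d * Real.exp (m * t)) atTop atTop :=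
      (Real.tendsto_exp_atTop.comp (tendsto_id.const_mul_atTop hm)).const_mul_atTop (by linarith)
    obtain ⟨t, ht1, ht2⟩ := ((ht.eventually_gt_atTop
      (Real.exp (m / 2 * V s + m * s) - d * Real.exp (m * s))).and (eventually_ge_atTop s)).exists
    linarith [hyle t ht2]
  have hα2 : α ≤ 2 := by
    have h1 : Tendsto (fun t => (fun t => -V t) t / t) atTop (𝓝 α) := by
      simpa [neg_div] using hlim.neg
    refine le_of_tendsto_div (A := -V T - 2 * T) h1 ?_
    filter_upwards [eventually_ge_atTop T] with t ht
    have := le_add_mul_of_hasDerivAt_le (a := 2) (fun t => (hV t).neg)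
      (fun t ht => by linarith [hV₁ge t ht]) ht
    simp only [Pi.neg_apply] at this
    linarith
  refine ⟨?_, hα2, ?_⟩
  · have := le_of_tendsto_div (a := 0) (A := (V₁ T + m * V T + 2) / m) hlim ?_
    · linarith
    · filter_upwards [eventually_ge_atTop T] with t ht
      have := le_add_mul_of_hasDerivAt_le (a := 0) hW
        (fun t ht => by nlinarith [h t ht, hexp t, sq_nonneg (V₁ t)]) ht
      rw [zero_mul, add_zero, le_div_iff₀ hm]
      linarith [hV₁ge t ht]
  · by_contra! hlt
    obtain ⟨β, hβ1, hβ2⟩ := exists_between hlt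
    have hbig : Tendsto (fun t : ℝ => c * Real.exp ((b - 2 * β) * t)) atTop atTop :=
      (Real.tendsto_exp_atTop.comp
        (tendsto_id.const_mul_atTop (by linarith : 0 < b - 2 * β))).const_mul_atTop hc
    have hev : ∀ᶠ t in atTop, V₂ t + m * V₁ t ≤ -(3 * m) := by
      filter_upwards [hlim.eventually_const_lt (neg_lt_neg hβ1), hbig.eventually_ge_atTop (3 * m),
        eventually_gt_atTop 0, eventually_ge_atTop T] with t h1 h2 h3 h4
      rw [lt_div_iff₀ h3] at h1
      have h5 : c * Real.exp ((b - 2 * β) * t) ≤ c * Real.exp (2 * V t + b * t) := by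
        gcongr; nlinarith
      nlinarith [h t h4, sq_nonneg (V₁ t)]
    obtain ⟨S, hS⟩ := eventually_atTop.1 hev
    have := le_of_tendsto_div (a := -3)
      (A := (V₁ S + m * V S + 3 * m * S + 2) / m) hlim ?_
    · linarith
    · filter_upwards [eventually_ge_atTop S, eventually_ge_atTop T] with t ht htT
      have h1 := le_add_mul_of_hasDerivAt_le hW hS ht
      have h2 := hV₁ge t htT
      have e : (V₁ S + m * V S + 3 * m * S + 2) / m + -3 * t =
        (V₁ S + m * V S + 3 * m * S + 2 - 3 * m * t) / m := by field_simp; ring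
      rw [e, le_div_iff₀ hm]
      linarith

lemma integrableOn_abs_log_norm {n : ℕ} (hn : 2 ≤ n) (r : ℝ) :
    IntegrableOn (fun x : E n => |Real.log ‖x‖|) (Metric.ball 0 r) := by
  have : Nontrivial (E n) := by
    rw [← Module.finrank_pos_iff (R := ℝ), finrank_euclideanSpace_fin]; omega
  have h := (integrableOn_fun_norm_addHaar (E := E n) (μ := volume) (f := fun s => |Real.log s|)
    (r := r)).2 ?_
  · exact h
  have hc : Continuous fun y : ℝ => y ^ (n - 2) * (|y * Real.log y|) :=
    (continuous_pow _).mul Real.continuous_mul_log.abs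
  refine ((hc.integrableOn_Icc (a := 0) (b := r)).mono_set Set.Ioo_subset_Icc_self).congr_fun
    (fun y hy => ?_) measurableSet_Ioo
  obtain ⟨k, rfl⟩ := Nat.exists_eq_add_of_le hn
  simp only [finrank_euclideanSpace_fin, smul_eq_mul, abs_mul, abs_of_pos hy.1]
  rw [show 2 + k - 2 = k by omega, show 2 + k - 1 = k + 1 by omega, pow_succ]
  ring

lemma exists_bound_integral_log_sub {n : ℕ} (hn : 2 ≤ n) {ψ : E n → ℝ} (hψ : Continuous ψ)
    (hc : HasCompactSupport ψ) (hnn : ∀ x, 0 ≤ ψ x) (hs : ∀ x, ψ x ≠ 0 → 1 ≤ ‖x‖ ∧ ‖x‖ ≤ 2) :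
    ∃ A : ℝ, 0 ≤ A ∧ ∀ z : E n, ‖z‖ ≤ 4 → Integrable (fun x => |Real.log ‖x - z‖| * ψ x) ∧
      ∫ x, |Real.log ‖x - z‖| * ψ x ≤ A := by
  obtain ⟨B, hB⟩ := hc.exists_bound_of_continuous hψ
  have hi : Integrable ((Metric.ball (0 : E n) 7).indicator fun x => |Real.log ‖x‖|) :=
    (integrable_indicator_iff measurableSet_ball).2 (integrableOn_abs_log_norm hn 7)
  have hB0 : 0 ≤ B := (norm_nonneg _).trans (hB 0)
  refine ⟨(∫ x, (Metric.ball (0 : E n) 7).indicator (fun x => |Real.log ‖x‖|) x) * B,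
    mul_nonneg (integral_nonneg fun x => Set.indicator_nonneg (fun _ _ => abs_nonneg _) _) hB0,
    fun z hz => ?_⟩
  have hiz := (hi.comp_sub_right z).mul_const B
  have hle : ∀ x, |Real.log ‖x - z‖| * ψ x ≤
      (Metric.ball (0 : E n) 7).indicator (fun x => |Real.log ‖x‖|) (x - z) * B := fun x => by
    by_cases hx : ψ x = 0
    · rw [hx, mul_zero]
      exact mul_nonneg (Set.indicator_nonneg (fun _ _ => abs_nonneg _) _) hB0
    · have hmem : x - z ∈ Metric.ball (0 : E n) 7 := by
        rw [mem_ball_zero_iff]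
        linarith [norm_sub_le x z, (hs x hx).2]
      rw [Set.indicator_of_mem hmem]
      exact mul_le_mul_of_nonneg_left ((le_abs_self _).trans (hB x)) (abs_nonneg _)
  have hint : Integrable (fun x => |Real.log ‖x - z‖| * ψ x) := by
    refine hiz.mono' ?_ (Eventually.of_forall fun x => ?_)
    · have : Measurable fun x : E n => |Real.log ‖x - z‖| := by fun_prop
      exact (this.mul hψ.measurable).aestronglyMeasurable
    · rw [Real.norm_of_nonneg (mul_nonneg (abs_nonneg _) (hnn x))]
      exact hle x
  refine ⟨hint, (integral_mono hint hiz hle).trans_eq ?_⟩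
  rw [integral_mul_const, integral_sub_right_eq_self
    (fun x => (Metric.ball (0 : E n) 7).indicator (fun x => |Real.log ‖x‖|) x) z]

lemma log_div_norm_dilation {n : ℕ} {x y : E n} {t : ℝ} (hy : y ≠ 0)
    (hx : x ≠ Real.exp (-t) • y) :
    Real.log (‖y‖ / ‖Real.exp t • x - y‖) =
      Real.log ‖y‖ - t - Real.log ‖x - Real.exp (-t) • y‖ := by
  have e : Real.exp t • x - y = Real.exp t • (x - Real.exp (-t) • y) := by
    rw [smul_sub, smul_smul, ← Real.exp_add]; simp
  have h1 : ‖x - Real.exp (-t) • y‖ ≠ 0 := norm_ne_zero_iff.2 (sub_ne_zero.2 hx)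
  rw [e, norm_smul, Real.norm_of_nonneg (Real.exp_pos t).le,
    Real.log_div (norm_ne_zero_iff.2 hy) (mul_ne_zero (Real.exp_pos t).ne' h1),
    Real.log_mul (Real.exp_pos t).ne' h1, Real.log_exp]
  ring

lemma abs_log_div_norm_dilation_le {n : ℕ} {x y : E n} {t : ℝ} (ht : 0 ≤ t) (hx2 : ‖x‖ ≤ 2) :
    |Real.log (‖y‖ / ‖Real.exp t • x - y‖)| ≤ (t + 2 - Real.log (min ‖y‖ 1)) +
      (if ‖Real.exp (-t) • y‖ ≤ 4 then |Real.log ‖x - Real.exp (-t) • y‖| else 0) := by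
  have hℓ : Real.log (min ‖y‖ 1) ≤ 0 :=
    Real.log_nonpos (le_min (norm_nonneg _) zero_le_one) (min_le_right _ _)
  have hite : 0 ≤ (if ‖Real.exp (-t) • y‖ ≤ 4 then |Real.log ‖x - Real.exp (-t) • y‖| else 0) := by
    split_ifs <;> positivity
  by_cases hy : y = 0
  · simp only [hy, norm_zero, zero_div, Real.log_zero, abs_zero]
    rw [hy, norm_zero] at hℓ
    have : (0 : ℝ) ≤ (if ‖Real.exp (-t) • (0 : E n)‖ ≤ 4 then
      |Real.log ‖x - Real.exp (-t) • (0 : E n)‖| else 0) := by split_ifs <;> positivity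
    linarith
  by_cases hx : x = Real.exp (-t) • y
  · have e : Real.exp t • x - y = 0 := by
      rw [hx, smul_smul, ← Real.exp_add]; simp
    rw [e, norm_zero, div_zero, Real.log_zero, abs_zero]
    linarith
  have hypos : 0 < ‖y‖ := norm_pos_iff.2 hy
  have hz : ‖Real.exp (-t) • y‖ = Real.exp (-t) * ‖y‖ := by
    rw [norm_smul, Real.norm_of_nonneg (Real.exp_pos _).le]
  have hlogz : Real.log ‖Real.exp (-t) • y‖ = Real.log ‖y‖ - t := by
    rw [hz, Real.log_mul (Real.exp_pos _).ne' hypos.ne', Real.log_exp]; ring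
  have hzpos : 0 < ‖Real.exp (-t) • y‖ := by rw [hz]; positivity
  rw [log_div_norm_dilation hy hx]
  have hlog2 : Real.log 2 ≤ 1 := Real.log_two_lt_d9.le.trans (by norm_num)
  split_ifs with h4
  · have hlog4 : Real.log 4 ≤ 2 := by
      rw [show (4 : ℝ) = 2 ^ 2 by norm_num, Real.log_pow]; push_cast; linarith
    have h1 : |Real.log ‖y‖ - t| ≤ t + 2 - Real.log (min ‖y‖ 1) := by
      have h2 : Real.log ‖y‖ - t ≤ 2 :=
        hlogz ▸ (Real.log_le_log hzpos h4).trans hlog4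
      have h3 : Real.log (min ‖y‖ 1) ≤ Real.log ‖y‖ :=
        Real.log_le_log (lt_min hypos one_pos) (min_le_left _ _)
      rw [abs_le]
      constructor <;> linarith
    exact (abs_sub _ _).trans (add_le_add_left h1 _)
  · push Not at h4
    rw [← hlogz]
    set z := Real.exp (-t) • y
    have h1 : ‖z‖ / 2 ≤ ‖x - z‖ := by
      have := norm_sub_norm_le z x
      rw [norm_sub_rev] at this
      linarith
    have h2 : ‖x - z‖ ≤ 2 * ‖z‖ := by linarith [norm_sub_le x z]
    have h3 := Real.log_le_log (by positivity) h1
    have h4 := Real.log_le_log (by linarith) h2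
    rw [Real.log_div hzpos.ne' two_ne_zero] at h3
    rw [Real.log_mul two_ne_zero hzpos.ne'] at h4
    rw [abs_le]
    constructor <;> linarith

/-- Uniform control of the weighted means of the logarithmic kernel. -/
lemma exists_kernel_bound {n : ℕ} (hn : 2 ≤ n) {ψ : E n → ℝ} (hψ : Continuous ψ)
    (hc : HasCompactSupport ψ) (hnn : ∀ x, 0 ≤ ψ x) (hs : ∀ x, ψ x ≠ 0 → 1 ≤ ‖x‖ ∧ ‖x‖ ≤ 2)
    (hψ1 : ∫ x, ψ x = 1) :
    ∃ A : ℝ, ∀ y : E n, ∀ t, 0 ≤ t →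
      Integrable (fun x => Real.log (‖y‖ / ‖Real.exp t • x - y‖) * ψ x) ∧
      ∫ x, |Real.log (‖y‖ / ‖Real.exp t • x - y‖) * ψ x| ≤ t + A - Real.log (min ‖y‖ 1) := by
  obtain ⟨A, hA0, hA⟩ := exists_bound_integral_log_sub hn hψ hc hnn hs
  refine ⟨A + 2, fun y t ht => ?_⟩
  set b : E n → ℝ := fun x => (t + 2 - Real.log (min ‖y‖ 1)) * ψ x +
    (if ‖Real.exp (-t) • y‖ ≤ 4 then |Real.log ‖x - Real.exp (-t) • y‖| * ψ x else 0) with hb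
  have hψi : Integrable ψ := hψ.integrable_of_hasCompactSupport hc
  have hb2 : Integrable (fun x => if ‖Real.exp (-t) • y‖ ≤ 4 then
      |Real.log ‖x - Real.exp (-t) • y‖| * ψ x else 0) ∧
      ∫ x, (if ‖Real.exp (-t) • y‖ ≤ 4 then
        |Real.log ‖x - Real.exp (-t) • y‖| * ψ x else 0) ≤ A := by
    split_ifs with h
    · exact hA _ h
    · simpa using hA0
  have hbi : Integrable b := (hψi.const_mul _).add hb2.1
  have hle : ∀ x, |Real.log (‖y‖ / ‖Real.exp t • x - y‖) * ψ x| ≤ b x := fun x => by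
    by_cases hx : ψ x = 0
    · simp [hb, hx]
    · rw [abs_mul, abs_of_nonneg (hnn x)]
      refine (mul_le_mul_of_nonneg_right (abs_log_div_norm_dilation_le ht (hs x hx).2)
        (hnn x)).trans_eq ?_
      simp only [hb]
      split_ifs <;> ring
  have hi : Integrable (fun x => Real.log (‖y‖ / ‖Real.exp t • x - y‖) * ψ x) := by
    refine hbi.mono' ?_ (Eventually.of_forall hle)
    have : Measurable fun x : E n => Real.log (‖y‖ / ‖Real.exp t • x - y‖) := by fun_prop
    exact (this.mul hψ.measurable).aestronglyMeasurable
  refine ⟨hi, (integral_mono hi.abs hbi hle).trans ?_⟩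
  rw [hb, integral_add (hψi.const_mul _) hb2.1, integral_const_mul, hψ1]
  linarith [hb2.2]

lemma tendsto_kernel_div {n : ℕ} (hn : 2 ≤ n) {ψ : E n → ℝ} (hψ : Continuous ψ)
    (hc : HasCompactSupport ψ) (hnn : ∀ x, 0 ≤ ψ x) (hs : ∀ x, ψ x ≠ 0 → 1 ≤ ‖x‖ ∧ ‖x‖ ≤ 2)
    (hψ1 : ∫ x, ψ x = 1) {y : E n} (hy : y ≠ 0) :
    Tendsto (fun t => (∫ x, Real.log (‖y‖ / ‖Real.exp t • x - y‖) * ψ x) / t) atTop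
      (𝓝 (-1)) := by
  obtain ⟨A, hA0, hA⟩ := exists_bound_integral_log_sub hn hψ hc hnn hs
  have : Nontrivial (E n) := ⟨⟨y, 0, hy⟩⟩
  have hz : ∀ᶠ t : ℝ in atTop, ‖Real.exp (-t) • y‖ ≤ 4 := by
    have h1 : Tendsto (fun t : ℝ => ‖Real.exp (-t) • y‖) atTop (𝓝 ‖(0 : ℝ) • y‖) :=
      ((Real.tendsto_exp_neg_atTop_nhds_zero).smul_const y).norm
    rw [zero_smul, norm_zero] at h1
    exact h1.eventually_le_const (by norm_num)
  have hψi : Integrable ψ := hψ.integrable_of_hasCompactSupport hc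
  rw [tendsto_iff_norm_sub_tendsto_zero]
  refine squeeze_zero' (Eventually.of_forall fun t => norm_nonneg _) ?_
    ((tendsto_const_nhds (x := |Real.log ‖y‖| + A)).div_atTop tendsto_id)
  filter_upwards [hz, eventually_gt_atTop 0] with t ht h0
  have hint : Integrable (fun x => Real.log ‖x - Real.exp (-t) • y‖ * ψ x) := by
    refine (hA _ ht).1.mono' ?_ (Eventually.of_forall fun x => ?_)
    · have : Measurable fun x : E n => Real.log ‖x - Real.exp (-t) • y‖ := by fun_prop
      exact (this.mul hψ.measurable).aestronglyMeasurable
    · rw [norm_mul, Real.norm_of_nonneg (hnn x), Real.norm_eq_abs]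
  have heq : ∫ x, Real.log (‖y‖ / ‖Real.exp t • x - y‖) * ψ x =
      Real.log ‖y‖ - t - ∫ x, Real.log ‖x - Real.exp (-t) • y‖ * ψ x := by
    have h1 : ∫ x, Real.log (‖y‖ / ‖Real.exp t • x - y‖) * ψ x =
        ∫ x, ((Real.log ‖y‖ - t) * ψ x - Real.log ‖x - Real.exp (-t) • y‖ * ψ x) := by
      refine integral_congr_ae ?_
      filter_upwards [measure_eq_zero_iff_ae_notMem.1
        (measure_singleton (μ := volume) (Real.exp (-t) • y))] with x hx
      rw [log_div_norm_dilation hy hx]; ring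
    rw [h1, integral_sub (hψi.const_mul _) hint, integral_const_mul, hψ1, mul_one]
  have hI : |∫ x, Real.log ‖x - Real.exp (-t) • y‖ * ψ x| ≤ A := by
    refine (abs_integral_le_integral_abs).trans (le_of_eq_of_le ?_ (hA _ ht).2)
    congr 1; ext x
    rw [abs_mul, abs_of_nonneg (hnn x)]
  rw [heq, Real.norm_eq_abs, show (Real.log ‖y‖ - t - ∫ x, Real.log ‖x - Real.exp (-t) • y‖ * ψ x)
    / t - -1 = (Real.log ‖y‖ - ∫ x, Real.log ‖x - Real.exp (-t) • y‖ * ψ x) / t by field_simp; ring,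
    abs_div, abs_of_pos h0]
  simp only [id]
  gcongr
  exact (abs_sub _ _).trans (add_le_add_right hI _)

/-- Weighted means of a logarithmic potential grow like minus its total mass. -/
lemma tendsto_mean_potential_div {n : ℕ} (hn : 2 ≤ n) {ψ f : E n → ℝ} (hψ : Continuous ψ)
    (hc : HasCompactSupport ψ) (hnn : ∀ x, 0 ≤ ψ x) (hs : ∀ x, ψ x ≠ 0 → 1 ≤ ‖x‖ ∧ ‖x‖ ≤ 2)
    (hψ1 : ∫ x, ψ x = 1) (hf : Integrable f)
    (hfl : Integrable fun y => Real.log (min ‖y‖ 1) * f y) :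
    Tendsto (fun t => (∫ x, (∫ y, Real.log (‖y‖ / ‖Real.exp t • x - y‖) * f y) * ψ x) / t) atTop
      (𝓝 (-∫ y, f y)) ∧
    ∀ t, 0 ≤ t →
      Integrable fun x => (∫ y, Real.log (‖y‖ / ‖Real.exp t • x - y‖) * f y) * ψ x := by
  obtain ⟨A, hA⟩ := exists_kernel_bound hn hψ hc hnn hs hψ1
  have hℓ : ∀ y : E n, Real.log (min ‖y‖ 1) ≤ 0 := fun y =>
    Real.log_nonpos (le_min (norm_nonneg _) zero_le_one) (min_le_right _ _)
  have hbound : ∀ s : ℝ, Integrable fun y => (s - Real.log (min ‖y‖ 1)) * |f y| := fun s => by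
    refine ((hf.abs.const_mul s).add hfl.abs).congr (Eventually.of_forall fun y => ?_)
    simp only [Pi.add_apply, abs_mul, abs_of_nonpos (hℓ y)]
    ring
  have hprod : ∀ t, 0 ≤ t → Integrable (fun z : E n × E n =>
      Real.log (‖z.2‖ / ‖Real.exp t • z.1 - z.2‖) * f z.2 * ψ z.1) (volume.prod volume) := by
    intro t ht
    have hm : AEStronglyMeasurable (fun z : E n × E n =>
        Real.log (‖z.2‖ / ‖Real.exp t • z.1 - z.2‖) * f z.2 * ψ z.1) (volume.prod volume) := by
      have h1 : Measurable fun z : E n × E n =>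
        Real.log (‖z.2‖ / ‖Real.exp t • z.1 - z.2‖) := by fun_prop
      exact (h1.aestronglyMeasurable.mul hf.1.comp_snd).mul
        (hψ.comp continuous_fst).aestronglyMeasurable
    rw [integrable_prod_iff' hm]
    constructor
    · refine Eventually.of_forall fun y => ((hA y t ht).1.mul_const (f y)).congr
        (Eventually.of_forall fun x => ?_)
      ring
    · refine (hbound (t + A)).mono' hm.norm.prod_swap.integral_prod_right'
        (Eventually.of_forall fun y => ?_)
      rw [Real.norm_of_nonneg (integral_nonneg fun x => norm_nonneg _)]
      refine le_of_eq_of_le ?_ (mul_le_mul_of_nonneg_right (hA y t ht).2 (abs_nonneg (f y)))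
      rw [← integral_mul_const]
      congr 1; ext x
      simp only [Real.norm_eq_abs, abs_mul]
      ring
  have hin : ∀ (t : ℝ) (y : E n),
      ∫ x, Real.log (‖y‖ / ‖Real.exp t • x - y‖) * f y * ψ x =
        (∫ x, Real.log (‖y‖ / ‖Real.exp t • x - y‖) * ψ x) * f y := fun t y => by
    rw [← integral_mul_const]
    congr 1; ext x; ring
  constructor
  · have hev : ∀ᶠ t : ℝ in atTop,
        ∫ y, (∫ x, Real.log (‖y‖ / ‖Real.exp t • x - y‖) * f y * ψ x) / t =
        (∫ x, (∫ y, Real.log (‖y‖ / ‖Real.exp t • x - y‖) * f y) * ψ x) / t := by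
      filter_upwards [eventually_ge_atTop 0] with t ht
      rw [integral_div, ← integral_integral_swap (hprod t ht)]
      simp_rw [integral_mul_const]
    rw [← integral_neg]
    refine Tendsto.congr' hev ?_
    refine tendsto_integral_filter_of_dominated_convergence
      (fun y => (1 + |A| - Real.log (min ‖y‖ 1)) * |f y|) ?_ ?_ (hbound _) ?_
    · filter_upwards [eventually_ge_atTop 0] with t ht
      exact ((hprod t ht).integral_prod_right.div_const t).1
    · filter_upwards [eventually_ge_atTop 1] with t ht
      refine Eventually.of_forall fun y => ?_
      have h0 : (0 : ℝ) < t := by linarith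
      rw [hin, norm_div, norm_mul, Real.norm_of_nonneg h0.le, Real.norm_eq_abs, Real.norm_eq_abs,
        div_le_iff₀ h0]
      have h1 : |∫ x, Real.log (‖y‖ / ‖Real.exp t • x - y‖) * ψ x| ≤
          (1 + |A| - Real.log (min ‖y‖ 1)) * t := by
        refine abs_integral_le_integral_abs.trans ((hA y t h0.le).2.trans ?_)
        nlinarith [hℓ y, abs_nonneg A, le_abs_self A]
      nlinarith [abs_nonneg (f y)]
    · have : Nontrivial (E n) := by
        rw [← Module.finrank_pos_iff (R := ℝ), finrank_euclideanSpace_fin]; omega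
      filter_upwards [measure_eq_zero_iff_ae_notMem.1
        (measure_singleton (μ := volume) (0 : E n))] with y hy
      have := (tendsto_kernel_div hn hψ hc hnn hs hψ1 (y := y) hy).mul_const (f y)
      simp_rw [hin]
      simpa [div_mul_eq_mul_div] using this
  · intro t ht
    have := (hprod t ht).integral_prod_left
    simpa only [integral_mul_const] using this

/-- A normalized radial smooth weight supported in `1 ≤ |x| ≤ 2`. -/
lemma exists_radial_weight {n : ℕ} (hn : 0 < n) : ∃ ψ : E n → ℝ, ContDiff ℝ 2 ψ ∧
    HasCompactSupport ψ ∧ (∀ x, 0 ≤ ψ x) ∧ (∀ x, ψ x ≠ 0 → 1 ≤ ‖x‖ ∧ ‖x‖ ≤ 2) ∧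
    ∫ x, ψ x = 1 ∧
    ∀ x i, ‖x‖ ^ 2 * fderiv ℝ ψ x (EuclideanSpace.single i 1) = x i * fderiv ℝ ψ x x := by
  let χ : ContDiffBump (5 / 2 : ℝ) := ⟨1 / 2, 3 / 2, by norm_num, by norm_num⟩
  have hsq : ∀ s : ℝ, χ (s ^ 2) ≠ 0 → 0 ≤ s → 1 ≤ s ∧ s ≤ 2 := fun s hs h0 => by
    have : s ^ 2 ∈ Function.support χ := hs
    rw [χ.support_eq, Metric.mem_ball, Real.dist_eq, abs_lt] at this
    simp only [χ] at this
    constructor <;> nlinarith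
  set g : E n → ℝ := fun x => χ (‖x‖ ^ 2) with hg
  have hgd : ContDiff ℝ 2 g := χ.contDiff.comp (contDiff_norm_sq ℝ)
  have hgc : HasCompactSupport g := by
    refine HasCompactSupport.of_support_subset_isCompact (isCompact_closedBall 0 2) fun x hx => ?_
    simpa using (hsq _ hx (norm_nonneg x)).2
  have hgpos : 0 < ∫ x, g x := by
    refine hgd.continuous.integral_pos_of_hasCompactSupport_nonneg_nonzero hgc
      (fun x => χ.nonneg) (x := EuclideanSpace.single ⟨0, hn⟩ (Real.sqrt (5 / 2))) ?_
    simp only [hg, PiLp.norm_single, Real.norm_eq_abs, sq_abs]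
    rw [Real.sq_sqrt (by norm_num), χ.one_of_mem_closedBall (by simp [χ])]
    exact one_ne_zero
  have hrad : ∀ x v, fderiv ℝ g x v = 2 * inner ℝ x v * deriv χ (‖x‖ ^ 2) := fun x v => by
    have h0 : HasDerivAt χ (deriv χ (‖x‖ ^ 2)) (‖x‖ ^ 2) :=
      ((χ.contDiff (n := 1)).differentiable one_ne_zero _).hasDerivAt
    have h1 : HasFDerivAt g (deriv χ (‖x‖ ^ 2) • (2 • (innerSL ℝ) x)) x :=
      HasDerivAt.comp_hasFDerivAt (f := fun x : E n => ‖x‖ ^ 2) x h0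
        (hasStrictFDerivAt_norm_sq x).hasFDerivAt
    rw [h1.fderiv]; simp; ring
  refine ⟨fun x => (∫ x, g x)⁻¹ * g x, contDiff_const.mul hgd, hgc.mul_left,
    fun x => mul_nonneg (inv_nonneg.2 hgpos.le) χ.nonneg,
    fun x hx => hsq _ (right_ne_zero_of_mul hx) (norm_nonneg x), ?_, fun x i => ?_⟩
  · rw [integral_const_mul, inv_mul_cancel₀ hgpos.ne']
  · rw [fderiv_const_mul (hgd.differentiable two_ne_zero x)]
    simp only [smul_apply, smul_eq_mul, hrad,
      EuclideanSpace.inner_single_right, real_inner_self_eq_norm_sq]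
    simp; ring

lemma lap_dilation {n : ℕ} {u : E n → ℝ} (hu : ContDiff ℝ 2 u) (s : ℝ) (x : E n) :
    lap (fun y => u (s • y)) x = s ^ 2 * lap u (s • x) := by
  have h1 : ∀ v, Differentiable ℝ fun y => fderiv ℝ u y v := fun v =>
    ((hu.fderiv_right (m := 1) (by norm_num)).clm_apply contDiff_const).differentiable one_ne_zero
  simp only [lap, Finset.mul_sum]
  refine Finset.sum_congr rfl fun i _ => ?_
  have h2 : (fun y => fderiv ℝ (fun y => u (s • y)) y (EuclideanSpace.single i 1)) =
      fun y => s * (fun y => fderiv ℝ u y (EuclideanSpace.single i 1)) (s • y) := by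
    ext y; rw [fderiv_comp_smul]; simp
  have h3 : DifferentiableAt ℝ (fun y => (fun y => fderiv ℝ u y (EuclideanSpace.single i 1))
      (s • y)) x := ((h1 _).comp (differentiable_id.const_smul s)) x
  rw [h2, fderiv_const_mul h3,
    fderiv_comp_smul (f := fun y => fderiv ℝ u y (EuclideanSpace.single i 1))]
  simp; ring

lemma Rg_eq_zero_of_eventually_const {n : ℕ} {u : E n → ℝ} {K : ℝ} {x : E n}
    (h : ∀ᶠ y in 𝓝 x, u y = K) : Rg n u x = 0 := by
  have h1 : ∀ᶠ y in 𝓝 x, fderiv ℝ u y = 0 := by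
    filter_upwards [h.eventually_nhds] with y hy
    rw [Filter.EventuallyEq.fderiv_eq (f := fun _ => K) hy]; simp
  have h2 : lap u x = 0 := by
    refine Finset.sum_eq_zero fun i _ => ?_
    have : (fun y => fderiv ℝ u y (EuclideanSpace.single i 1)) =ᶠ[𝓝 x] fun _ => (0 : ℝ) := by
      filter_upwards [h1] with y hy
      simp [hy]
    rw [this.fderiv_eq]; simp
  have h3 : gradient u x = 0 := by simp [gradient, h1.self_of_nhds]
  simp [Rg, h2, h3]

lemma exists_ne_of_le_Rg {n : ℕ} (hn : 0 < n) {u : E n → ℝ} {C p R : ℝ} (hC : 0 < C)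
    (h : ∀ x : E n, R ≤ ‖x‖ → C * ‖x‖ ^ (-p) ≤ Rg n u x) (K : ℝ) :
    ∃ x : E n, max R 2 < ‖x‖ ∧ u x ≠ K := by
  have hnt : Nontrivial (E n) := by
    rwa [← Module.finrank_pos_iff (R := ℝ), finrank_euclideanSpace_fin]
  by_contra! hcon
  obtain ⟨x, hx⟩ := NormedSpace.exists_lt_norm ℝ (E n) (max R 2)
  have h0 : Rg n u x = 0 := Rg_eq_zero_of_eventually_const <| by
    filter_upwards [continuous_norm.continuousAt.eventually_const_lt hx] with y hy
    exact hcon y hy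
  have h1 := h x ((le_max_left R 2).trans hx.le)
  have h2 : 0 < ‖x‖ := two_pos.trans ((le_max_right R 2).trans_lt hx)
  have : 0 < C * ‖x‖ ^ (-p) := mul_pos hC (Real.rpow_pos_of_pos h2 _)
  linarith

/-- A density whose potential is somewhere integrable far out is log-integrable at the origin. -/
lemma integrable_log_min_mul {n : ℕ} {f : E n → ℝ} (hf : Integrable f) {x : E n} (hx : 2 ≤ ‖x‖)
    (h : Integrable fun y => Real.log (‖y‖ / ‖x - y‖) * f y) :
    Integrable fun y => Real.log (min ‖y‖ 1) * f y := by
  have h1 : Integrable (fun y => (Metric.ball (0 : E n) 1).indicator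
      (fun y => Real.log ‖x - y‖ * f y) y) := by
    refine (hf.norm.const_mul (‖x‖ + 1)).mono' ?_ (Eventually.of_forall fun y => ?_)
    · have : Measurable fun y : E n => Real.log ‖x - y‖ := by fun_prop
      exact (this.aestronglyMeasurable.mul hf.1).indicator measurableSet_ball
    · by_cases hy : y ∈ Metric.ball (0 : E n) 1
      · rw [Set.indicator_of_mem hy, norm_mul]
        rw [mem_ball_zero_iff] at hy
        have ha : 1 ≤ ‖x - y‖ := by linarith [norm_sub_norm_le x y]
        have hb : ‖x - y‖ ≤ ‖x‖ + 1 := by linarith [norm_sub_le x y]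
        gcongr
        rw [Real.norm_of_nonneg (Real.log_nonneg ha)]
        linarith [Real.log_le_sub_one_of_pos (by linarith : 0 < ‖x - y‖)]
      · rw [Set.indicator_of_notMem hy, norm_zero]
        positivity
  refine ((h.indicator (measurableSet_ball (x := (0 : E n)) (ε := 1))).add h1).congr
    ?_
  have : Nontrivial (E n) := ⟨⟨x, 0, fun h0 => by norm_num [h0] at hx⟩⟩
  filter_upwards [measure_eq_zero_iff_ae_notMem.1
    (measure_singleton (μ := volume) (0 : E n))] with y h0
  simp only [Pi.add_apply]
  by_cases hy : y ∈ Metric.ball (0 : E n) 1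
  · rw [Set.indicator_of_mem hy, Set.indicator_of_mem hy]
    rw [mem_ball_zero_iff] at hy
    rw [min_eq_left hy.le]
    have h2 : 0 < ‖x - y‖ := by linarith [norm_sub_norm_le x y]
    rw [Real.log_div (norm_ne_zero_iff.2 h0) h2.ne']
    ring
  · rw [Set.indicator_of_notMem hy, Set.indicator_of_notMem hy]
    rw [mem_ball_zero_iff, not_lt] at hy
    simp [min_eq_right hy]

/-- The lower bound on the scalar curvature, as a pointwise bound on the Laplacian of a dilation
of `u` on `1 ≤ |x| ≤ 2`. -/
lemma sq_norm_mul_lap_dilation_le {n : ℕ} (hn : 2 ≤ n) {u : E n → ℝ} (hu : ContDiff ℝ 2 u)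
    {C p R t : ℝ} (hC : 0 < C) (hR : 0 < R)
    (h : ∀ x : E n, R ≤ ‖x‖ → C * ‖x‖ ^ (-p) ≤ Rg n u x) (ht : Real.log R ≤ t) {x : E n}
    (hx1 : 1 ≤ ‖x‖) (hx2 : ‖x‖ ≤ 2) :
    lap (fun y => u (Real.exp t • y)) x * ‖x‖ ^ 2 ≤
      -((n - 2 : ℝ) / 2 * (fderiv ℝ (fun y => u (Real.exp t • y)) x x) ^ 2) -
      C / (2 * (n - 1)) * min 1 (2 ^ (2 - p)) * Real.exp ((2 - p) * t) *
        Real.exp (2 * u (Real.exp t • x)) := by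
  have hn' : (2 : ℝ) ≤ n := by exact_mod_cast hn
  have hn1 : (0 : ℝ) < 2 * (n - 1) := by linarith
  have hn0 : (n : ℝ) - 1 ≠ 0 := by linarith
  set X := Real.exp t • x with hX
  have hXn : ‖X‖ = Real.exp t * ‖x‖ := by
    rw [hX, norm_smul, Real.norm_of_nonneg (Real.exp_pos t).le]
  have hXpos : 0 < ‖X‖ := by rw [hXn]; positivity
  have hRX : R ≤ ‖X‖ := by
    have : R ≤ Real.exp t := (Real.log_le_iff_le_exp hR).1 ht
    rw [hXn]; nlinarith [Real.exp_pos t]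
  have hD : fderiv ℝ (fun y => u (Real.exp t • y)) x x = fderiv ℝ u X X := by
    rw [fderiv_comp_smul]; simp [hX]
  have hL : lap (fun y => u (Real.exp t • y)) x * ‖x‖ ^ 2 = lap u X * ‖X‖ ^ 2 := by
    rw [lap_dilation hu, hXn]; ring
  have hgrad : (fderiv ℝ u X X) ^ 2 ≤ ‖gradient u X‖ ^ 2 * ‖X‖ ^ 2 := by
    have h1 : ‖gradient u X‖ = ‖fderiv ℝ u X‖ := by simp [gradient]
    rw [h1, ← mul_pow, ← sq_abs]
    gcongr
    exact (fderiv ℝ u X).le_opNorm X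
  have hpow : min 1 (2 ^ (2 - p)) * Real.exp ((2 - p) * t) ≤ ‖X‖ ^ (-p) * ‖X‖ ^ 2 := by
    have h1 : ‖X‖ ^ (-p) * ‖X‖ ^ 2 = ‖x‖ ^ (2 - p) * Real.exp ((2 - p) * t) := by
      rw [← Real.rpow_natCast, ← Real.rpow_add hXpos, hXn,
        Real.mul_rpow (Real.exp_pos t).le (norm_nonneg x), ← Real.exp_mul]
      push_cast
      rw [show -p + 2 = 2 - p by ring, mul_comm t]; ring
    rw [h1]
    gcongr
    rcases le_total 0 (2 - p) with h2 | h2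
    · exact (min_le_left _ _).trans (Real.one_le_rpow hx1 h2)
    · exact (min_le_right _ _).trans (Real.rpow_le_rpow_of_nonpos (by linarith) hx2 h2)
  have hmain := h X hRX
  rw [Rg] at hmain
  have hexp : Real.exp (2 * u X) * Real.exp (-2 * u X) = 1 := by
    rw [← Real.exp_add]; simp
  have h1 : C / (2 * (n - 1)) * ‖X‖ ^ (-p) * Real.exp (2 * u X) ≤
      -(lap u X) - (n - 2) / 2 * ‖gradient u X‖ ^ 2 := by
    have h2 := mul_le_mul_of_nonneg_left hmain
      (div_nonneg (Real.exp_pos (2 * u X)).le hn1.le)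
    calc _ = Real.exp (2 * u X) / (2 * (n - 1)) * (C * ‖X‖ ^ (-p)) := by ring
      _ ≤ _ := h2
      _ = (Real.exp (2 * u X) * Real.exp (-2 * u X)) *
          (-(lap u X) - (n - 2) / 2 * ‖gradient u X‖ ^ 2) := by
        field_simp
      _ = _ := by rw [hexp, one_mul]
  have h2 := mul_le_mul_of_nonneg_right h1 (sq_nonneg ‖X‖)
  have h3 := mul_le_mul_of_nonneg_left hgrad (by linarith : (0 : ℝ) ≤ (n - 2) / 2)
  have h4 := mul_le_mul_of_nonneg_left hpow
    (by positivity : 0 ≤ C / (2 * (n - 1)) * Real.exp (2 * u X))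
  rw [hD, hL]
  linarith

/-- Jensen's inequality turns a pointwise curvature bound into a Riccati inequality for means. -/
lemma mean_lap_le {n : ℕ} {w ψ : E n → ℝ} (hw : ContDiff ℝ 2 w) (hψ : Continuous ψ)
    (hc : HasCompactSupport ψ) (hnn : ∀ x, 0 ≤ ψ x) (hψ1 : ∫ x, ψ x = 1) {m c : ℝ} (hm : 0 ≤ m)
    (hc0 : 0 ≤ c)
    (h : ∀ x, ψ x ≠ 0 → lap w x * ‖x‖ ^ 2 ≤
      -(m / 2 * (fderiv ℝ w x x) ^ 2) - c * Real.exp (2 * w x)) :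
    ∫ x, lap w x * (‖x‖ ^ 2 * ψ x) ≤ -(m / 2 * (∫ x, fderiv ℝ w x x * ψ x) ^ 2) -
      c * Real.exp (2 * ∫ x, w x * ψ x) := by
  set V := ∫ x, w x * ψ x with hV
  set V₁ := ∫ x, fderiv ℝ w x x * ψ x with hV₁
  have hlapc : Continuous (lap w) := by
    refine continuous_finsetSum _ fun i _ => ?_
    exact (((hw.fderiv_right (m := 1) (by norm_num)).clm_apply
      contDiff_const).continuous_fderiv one_ne_zero).clm_apply continuous_const
  have hDc : Continuous fun x => fderiv ℝ w x x :=
    (hw.continuous_fderiv two_ne_zero).clm_apply continuous_id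
  have hi1 : Integrable fun x => lap w x * (‖x‖ ^ 2 * ψ x) :=
    (hlapc.mul ((by fun_prop : Continuous fun x : E n => ‖x‖ ^ 2).mul
      hψ)).integrable_of_hasCompactSupport hc.mul_left.mul_left
  have hiD : Integrable fun x => fderiv ℝ w x x * ψ x :=
    (hDc.mul hψ).integrable_of_hasCompactSupport hc.mul_left
  have hiw : Integrable fun x => w x * ψ x :=
    (hw.continuous.mul hψ).integrable_of_hasCompactSupport hc.mul_left
  have hiψ : Integrable ψ := hψ.integrable_of_hasCompactSupport hc
  have key := integral_mono hi1 (((hiD.const_mul (-(m * V₁))).add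
    (hiw.const_mul (-(2 * c * Real.exp (2 * V))))).add
    (hiψ.const_mul (m / 2 * V₁ ^ 2 - c * Real.exp (2 * V) * (1 - 2 * V)))) fun x => ?_
  · rw [integral_add' ((hiD.const_mul _).add (hiw.const_mul _)) (hiψ.const_mul _),
      integral_add' (hiD.const_mul _) (hiw.const_mul _), integral_const_mul, integral_const_mul,
      integral_const_mul, ← hV, ← hV₁, hψ1] at key
    linarith
  · simp only [Pi.add_apply]
    by_cases hx : ψ x = 0
    · simp [hx]
    have h1 : Real.exp (2 * V) * (1 + 2 * (w x - V)) ≤ Real.exp (2 * w x) := by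
      have e : Real.exp (2 * w x) = Real.exp (2 * V) * Real.exp (2 * (w x - V)) := by
        rw [← Real.exp_add]; ring_nf
      rw [e]
      gcongr
      linarith [Real.add_one_le_exp (2 * (w x - V))]
    have h2 := mul_le_mul_of_nonneg_left h1 hc0
    have h3 : 0 ≤ m / 2 * (fderiv ℝ w x x - V₁) ^ 2 := by positivity
    have h4 : lap w x * ‖x‖ ^ 2 ≤ -(m * V₁) * fderiv ℝ w x x +
        -(2 * c * Real.exp (2 * V)) * w x +
        (m / 2 * V₁ ^ 2 - c * Real.exp (2 * V) * (1 - 2 * V)) := by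
      nlinarith [h x hx]
    have h5 := mul_le_mul_of_nonneg_right h4 (hnn x)
    linarith

/-- The normalized total curvature `α` satisfies `0 ≤ α ≤ 2` and `1 - p / 2 ≤ α`. -/
lemma mass_bounds {n : ℕ} (hn : 3 ≤ n) {u f : E n → ℝ} (hu : ContDiff ℝ 2 u) (hf : Integrable f)
    {a K : ℝ} (hpot : ∀ x, u x = a * (∫ y, Real.log (‖y‖ / ‖x - y‖) * f y) + K)
    {C p R : ℝ} (hC : 0 < C) (hR : 0 < R)
    (h : ∀ x : E n, R ≤ ‖x‖ → C * ‖x‖ ^ (-p) ≤ Rg n u x) :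
    0 ≤ a * ∫ y, f y ∧ a * ∫ y, f y ≤ 2 ∧ (2 - p) / 2 ≤ a * ∫ y, f y := by
  have hn' : (3 : ℝ) ≤ n := by exact_mod_cast hn
  have hn1 : (0 : ℝ) < 2 * (n - 1) := by linarith
  obtain ⟨ψ, hψ, hc, hnn, hs, hψ1, hrad⟩ := exists_radial_weight (n := n) (by omega)
  have hu1 : ContDiff ℝ 1 u := hu.of_le (by norm_num)
  have hψc1 : ContDiff ℝ 1 ψ := hψ.of_le (by norm_num)
  have hfl : Integrable fun y => Real.log (min ‖y‖ 1) * f y := by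
    obtain ⟨x, hx2, hxK⟩ := exists_ne_of_le_Rg (by omega) hC h K
    refine integrable_log_min_mul hf ((le_max_right R 2).trans hx2.le) ?_
    by_contra hni
    exact hxK (by rw [hpot x, integral_undef hni, mul_zero, zero_add])
  obtain ⟨hlim, hpoti⟩ := tendsto_mean_potential_div (by omega) hψ.continuous hc hnn hs hψ1 hf hfl
  have hDψ : ContDiff ℝ 1 fun x => fderiv ℝ ψ x x :=
    (hψ.fderiv_right (by norm_num)).clm_apply contDiff_id
  have hDψc : HasCompactSupport fun x => fderiv ℝ ψ x x := (hc.fderiv ℝ).mono' fun x hx => by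
    refine subset_tsupport _ fun h0 => hx ?_
    simp [h0]
  set ψ₁ : E n → ℝ := fun x => -(n * ψ x + fderiv ℝ ψ x x) with hψ₁
  have hψ₁c : Continuous ψ₁ := ((continuous_const.mul hψ.continuous).add hDψ.continuous).neg
  have hψ₁s : HasCompactSupport ψ₁ := (hc.mul_left.add hDψc).neg
  have hut : ∀ t : ℝ, ContDiff ℝ 2 fun y => u (Real.exp t • y) := fun t =>
    hu.comp (contDiff_const_smul _)
  have hV₁ : ∀ t, ∫ x, fderiv ℝ (fun y => u (Real.exp t • y)) x x * ψ x =
      ∫ x, u (Real.exp t • x) * ψ₁ x := fun t =>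
    integral_euler_mul ((hut t).of_le (by norm_num)) hψc1 hc
  have key := growth_of_riccati_le (V := fun t => ∫ x, u (Real.exp t • x) * ψ x)
    (V₁ := fun t => ∫ x, u (Real.exp t • x) * ψ₁ x)
    (V₂ := fun t => ∫ x, fderiv ℝ (fun y => u (Real.exp t • y)) x x * ψ₁ x)
    (m := n - 2) (c := C / (2 * (n - 1)) * min 1 (2 ^ (2 - p))) (b := 2 - p) (T := Real.log R)
    (α := a * ∫ y, f y) (by linarith)
    (mul_pos (by positivity) (lt_min one_pos (by positivity)))
    (fun t => hV₁ t ▸ hasDerivAt_integral_dilation hu1 hψ.continuous hc t)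
    (fun t => hasDerivAt_integral_dilation hu1 hψ₁c hψ₁s t) ?_ ?_
  · exact key
  · intro t ht
    have hJ := mean_lap_le (hut t) hψ.continuous hc hnn hψ1 (m := n - 2)
      (c := C / (2 * (n - 1)) * min 1 (2 ^ (2 - p)) * Real.exp ((2 - p) * t)) (by linarith)
      (by positivity)
      fun x hx => sq_norm_mul_lap_dilation_le (by omega) hu hC hR h ht (hs x hx).1 (hs x hx).2
    have hDc : Continuous fun x => fderiv ℝ (fun y => u (Real.exp t • y)) x x :=
      ((hut t).continuous_fderiv two_ne_zero).clm_apply continuous_id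
    rw [integral_sq_norm_mul_lap (hut t) hψc1 hc hrad, ← integral_neg] at hJ
    have hsplit : ∫ x, -(fderiv ℝ (fun y => u (Real.exp t • y)) x x *
        (2 * ψ x + fderiv ℝ ψ x x)) =
        (∫ x, fderiv ℝ (fun y => u (Real.exp t • y)) x x * ψ₁ x) +
        (n - 2) * ∫ x, fderiv ℝ (fun y => u (Real.exp t • y)) x x * ψ x := by
      rw [← integral_const_mul, ← integral_add]
      · congr 1; ext x
        simp only [hψ₁]; ring
      · exact (hDc.mul hψ₁c).integrable_of_hasCompactSupport hψ₁s.mul_left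
      · exact ((hDc.mul hψ.continuous).integrable_of_hasCompactSupport hc.mul_left).const_mul _
    rw [hsplit, hV₁ t] at hJ
    rw [Real.exp_add]
    linarith
  · have hev : ∀ᶠ t : ℝ in atTop,
        a * ((∫ x, (∫ y, Real.log (‖y‖ / ‖Real.exp t • x - y‖) * f y) * ψ x) / t) + K / t =
        (∫ x, u (Real.exp t • x) * ψ x) / t := by
      filter_upwards [eventually_ge_atTop 0] with t ht
      simp_rw [hpot, add_mul, mul_assoc]
      rw [integral_add ((hpoti t ht).const_mul a)
        ((hψ.continuous.integrable_of_hasCompactSupport hc).const_mul K), integral_const_mul,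
        integral_const_mul, hψ1]
      ring
    have hlim' := (hlim.const_mul a).add ((tendsto_const_nhds (x := K)).div_atTop tendsto_id)
    simp only [mul_neg, add_zero] at hlim'
    exact hlim'.congr' hev

lemma not_integrable_log_mul_add_const {n : ℕ} (hn : 0 < n) {f : E n → ℝ} (hf : Integrable f)
    (x : E n) {K : ℝ} (hK : K ≠ 0) :
    ¬ Integrable fun y => Real.log (‖y‖ / ‖x - y‖) * f y + K := by
  have hnt : Nontrivial (E n) := by
    rwa [← Module.finrank_pos_iff (R := ℝ), finrank_euclideanSpace_fin]
  intro h
  set S : Set (E n) := (Metric.ball 0 (2 * ‖x‖ + 1))ᶜ with hS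
  have hSm : MeasurableSet S := measurableSet_ball.compl
  have h1 : IntegrableOn (fun y => Real.log (‖y‖ / ‖x - y‖) * f y) S := by
    refine (hf.norm.integrableOn (s := S)).mono' ?_ ?_
    · have : Measurable fun y : E n => Real.log (‖y‖ / ‖x - y‖) := by fun_prop
      exact (this.aestronglyMeasurable.mul hf.1).restrict
    · filter_upwards [ae_restrict_mem hSm] with y hy
      simp only [hS, Set.mem_compl_iff, mem_ball_zero_iff, not_lt] at hy
      rw [norm_mul, Real.norm_eq_abs]
      refine mul_le_of_le_one_left (norm_nonneg _) ?_
      have hx0 := norm_nonneg x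
      have ha : ‖x - y‖ ≤ 2 * ‖y‖ := by linarith [norm_sub_le x y]
      have hb : ‖y‖ ≤ 2 * ‖x - y‖ := by
        have := norm_sub_norm_le y x
        rw [norm_sub_rev] at this
        linarith
      have hy0 : 0 < ‖y‖ := by linarith
      have hxy0 : 0 < ‖x - y‖ := by linarith
      have h2 : Real.log 2 ≤ 1 := Real.log_two_lt_d9.le.trans (by norm_num)
      have h3 := Real.log_le_log hxy0 ha
      have h4 := Real.log_le_log hy0 hb
      rw [Real.log_mul two_ne_zero hy0.ne'] at h3
      rw [Real.log_mul two_ne_zero hxy0.ne'] at h4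
      rw [Real.log_div hy0.ne' hxy0.ne', abs_le]
      constructor <;> linarith
  have h2 : IntegrableOn (fun _ : E n => K) S := by
    refine (h.integrableOn.sub h1).congr (Eventually.of_forall fun y => ?_)
    simp
  rw [integrableOn_const_iff] at h2
  have h3 : volume (Set.univ : Set (E n)) < ⊤ := by
    rw [← Set.union_compl_self (Metric.ball (0 : E n) (2 * ‖x‖ + 1))]
    exact measure_union_lt_top measure_ball_lt_top (by simpa [hK] using h2)
  simp at h3
/-- if `R_g(x) ≥ C|x|^{−p}` near infinity then
`((n−1)!|𝕊ⁿ|/2)·max{0,1−p/2} ≤ ∫ Q e^{nu} ≤ (n−1)!|𝕊ⁿ|`. -/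
theorem stmt_9 (n : ℕ) (hn : 4 ≤ n) (hne : Even n)
    (u Q : E n → ℝ) (hu : ContDiff ℝ (⊤ : ℕ∞) u)
    (hint : Integrable (fun y => Q y * Real.exp (n * u y)))
    (hnorm : IsNormal n u Q)
    (C p : ℝ) (hC : 0 < C) (hp : -2 ≤ p)
    (hR : ∃ R : ℝ, 0 < R ∧ ∀ x : E n, R ≤ ‖x‖ → C * ‖x‖ ^ (-p) ≤ Rg n u x) :
    (Nat.factorial (n - 1) * sphereVol n) / 2 * max 0 (1 - p / 2) ≤
        ∫ x, Q x * Real.exp (n * u x) ∧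
      ∫ x, Q x * Real.exp (n * u x) ≤ Nat.factorial (n - 1) * sphereVol n := by
  obtain ⟨K, hK⟩ := hnorm
  obtain ⟨R, hR0, hR⟩ := hR
  obtain ⟨x, -, hx⟩ := exists_ne_of_le_Rg (by omega) hC hR 0
  -- The constant is inside the integral, so it has to vanish for the integrand to be integrable.
  have hK0 : K = 0 := by
    by_contra hK0
    exact hx (by rw [hK x, integral_undef
      (not_integrable_log_mul_add_const (by omega) hint x hK0), mul_zero])
  subst hK0
  have hu2 : ContDiff ℝ 2 u := contDiff_infty.1 hu 2
  obtain ⟨h0, h2, hp2⟩ := mass_bounds (by omega) hu2 hint (K := 0)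
    (fun x => by simpa only [add_zero] using hK x) hC hR0 hR
  set I := ∫ x, Q x * Real.exp (n * u x)
  have hc0 : (0 : ℝ) ≤ Nat.factorial (n - 1) * sphereVol n :=
    mul_nonneg (Nat.cast_nonneg _) ENNReal.toReal_nonneg
  have hc : (0 : ℝ) < Nat.factorial (n - 1) * sphereVol n :=
    lt_of_le_of_ne hc0 fun hc => hx (by rw [hK x, ← hc, div_zero, zero_mul])
  set c := (Nat.factorial (n - 1) : ℝ) * sphereVol n
  have hI : c / 2 * (2 / c * I) = I := by field_simp
  constructor
  · rw [← hI]
    gcongr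
    exact max_le h0 (by linarith)
  · rw [← hI]
    calc _ ≤ c / 2 * 2 := by gcongr
      _ = c := by ring
end
end
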